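/- arXiv:1003.0887 — 4 statements merged into one kernel-verified Lean document; each statement's English description precedes it below -/
import Mathlib

section
/- Let X be a compact Hausdorff space and let k be a continuous symmetric positive definite kernel on X with RKHS H. Then k is c-universal if and only if the embedding μ ↦ ∫_X k(·,x) dμ(x) from M_b(X) into H is injective, i.e., ∫_X k(·,x) dμ(x) = 0 implies μ = 0 for every μ ∈ M_b(X). -/
open MeasureTheory Filter Topology RealInnerProductSpace

/-- Integral of a vector-valued function with respect to a finite signed measure,
defined via the Jordan decomposition. -/
noncomputable def svInt {X : Type*} [MeasurableSpace X] {E : Type*}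
    [NormedAddCommGroup E] [NormedSpace ℝ E]
    (μ : MeasureTheory.SignedMeasure X) (f : X → E) : E :=
  (∫ x, f x ∂μ.toJordanDecomposition.posPart) - ∫ x, f x ∂μ.toJordanDecomposition.negPart

/-- A finite measure dominated by a finite inner regular measure is inner regular. -/
theorem innerRegular_of_le {X : Type*} [TopologicalSpace X] [T2Space X] [MeasurableSpace X]
    [BorelSpace X] {μ ν : Measure X} [IsFiniteMeasure ν] [ν.InnerRegular] (h : μ ≤ ν) :
    μ.InnerRegular := by
  refine ⟨fun A hA r hr => ?_⟩
  obtain ⟨K, hKA, hK, hlt⟩ := hA.exists_isCompact_lt_add (μ := ν) (measure_ne_top ν A)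
    (tsub_pos_of_lt hr).ne'
  refine ⟨K, hKA, hK, ?_⟩
  have hdiff : ν (A \ K) < μ A - r :=
    measure_sdiff_lt_of_lt_add hK.measurableSet.nullMeasurableSet hKA (measure_ne_top ν K) hlt
  have hμK : μ (A \ K) < μ A - r := (h _).trans_lt hdiff
  by_contra hle
  have hA_le : μ A ≤ r + μ (A \ K) :=
    calc μ A ≤ μ (K ∪ A \ K) := measure_mono (by simp)
      _ ≤ μ K + μ (A \ K) := measure_union_le _ _
      _ ≤ r + μ (A \ K) := by gcongr; exact not_lt.mp hle
  exact absurd (tsub_le_iff_left.mpr hA_le) (not_le.mpr hμK)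

/-- A continuous linear functional on `C(X, ℝ)` is a difference of two positive functionals. -/
theorem exists_nonneg_sub_nonneg {X : Type*} [TopologicalSpace X] [CompactSpace X]
    (L : C(X, ℝ) →L[ℝ] ℝ) :
    ∃ P Q : C(X, ℝ) →ₗ[ℝ] ℝ, (∀ f, 0 ≤ f → 0 ≤ P f) ∧ (∀ f, 0 ≤ f → 0 ≤ Q f) ∧
      ∀ f, L f = P f - Q f := by
  let D : C(X, ℝ) →ₗ[ℝ] C(X, ℝ) × C(X, ℝ) := LinearMap.id.prod (-LinearMap.id)
  let F : (C(X, ℝ) × C(X, ℝ)) →ₗ.[ℝ] ℝ :=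
    { domain := LinearMap.range D
      toFun := (L.toLinearMap ∘ₗ LinearMap.fst ℝ _ _).domRestrict _ }
  let N : C(X, ℝ) × C(X, ℝ) → ℝ := fun p => ‖L‖ * max ‖p.1 ⊔ 0‖ ‖p.2 ⊔ 0‖
  have hpos_apply (f : C(X, ℝ)) (x : X) : f x ⊔ 0 ≤ ‖f ⊔ 0‖ :=
    (le_abs_self _).trans ((f ⊔ 0).norm_coe_le_norm x)
  have hpos_smul (c : ℝ) (hc : 0 < c) (f : C(X, ℝ)) : ‖(c • f) ⊔ 0‖ = c * ‖f ⊔ 0‖ := by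
    have : (c • f) ⊔ 0 = c • (f ⊔ 0) := by
      ext x
      simp [mul_max_of_nonneg _ _ hc.le]
    rw [this, norm_smul, Real.norm_of_nonneg hc.le]
  have hpos_add (f g : C(X, ℝ)) : ‖(f + g) ⊔ 0‖ ≤ ‖f ⊔ 0‖ + ‖g ⊔ 0‖ := by
    refine (ContinuousMap.norm_le _ (by positivity)).2 fun x => ?_
    have hf := hpos_apply f x
    have hg := hpos_apply g x
    simp only [ContinuousMap.sup_apply, ContinuousMap.add_apply, ContinuousMap.zero_apply]
    rw [Real.norm_of_nonneg le_sup_right]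
    refine sup_le ?_ (by positivity)
    linarith [le_sup_left (a := f x) (b := 0), le_sup_left (a := g x) (b := 0)]
  obtain ⟨M, hMF, hMN⟩ := exists_extension_of_le_sublinear F N
    (fun c hc p => by
      simp only [N, Prod.smul_fst, Prod.smul_snd, hpos_smul c hc,
        ← mul_max_of_nonneg _ _ hc.le]
      ring)
    (fun p q => by
      simp only [N, Prod.fst_add, Prod.snd_add, ← mul_add]
      gcongr
      exact max_le ((hpos_add _ _).trans (add_le_add (le_max_left _ _) (le_max_left _ _)))
        ((hpos_add _ _).trans (add_le_add (le_max_right _ _) (le_max_right _ _))))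
    (by
      rintro ⟨_, f, rfl⟩
      change L f ≤ ‖L‖ * max ‖f ⊔ 0‖ ‖(-f) ⊔ 0‖
      refine (le_abs_self _).trans ((L.le_opNorm f).trans ?_)
      gcongr
      refine (ContinuousMap.norm_le _ (by positivity)).2 fun x => ?_
      rw [Real.norm_eq_abs]
      refine abs_le'.2 ⟨le_max_of_le_left (le_sup_left.trans (hpos_apply f x)),
        le_max_of_le_right (le_sup_left.trans (hpos_apply (-f) x))⟩)
  refine ⟨M ∘ₗ LinearMap.inl ℝ _ _, M ∘ₗ LinearMap.inr ℝ _ _, fun f hf => ?_, fun f hf => ?_,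
    fun f => ?_⟩
  · have h := hMN (-(f, 0))
    have h0 : -f ⊔ 0 = 0 := sup_eq_right.2 (neg_nonpos.2 hf)
    rw [map_neg] at h
    simpa [N, h0, -Prod.neg_mk] using h
  · have h := hMN (-(0, f))
    have h0 : -f ⊔ 0 = 0 := sup_eq_right.2 (neg_nonpos.2 hf)
    rw [map_neg] at h
    simpa [N, h0, -Prod.neg_mk] using h
  · have h : M (f, -f) = L f := hMF ⟨(f, -f), f, rfl⟩
    rw [← h]
    simp [← map_sub]

/-- A positive linear functional on `C(X, ℝ)` is integration against a finite regular measure. -/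
theorem exists_regular_integral_eq {X : Type*} [TopologicalSpace X] [CompactSpace X] [T2Space X]
    [MeasurableSpace X] [BorelSpace X] (P : C(X, ℝ) →ₗ[ℝ] ℝ) (hP : ∀ f, 0 ≤ f → 0 ≤ P f) :
    ∃ μ : Measure X, IsFiniteMeasure μ ∧ μ.Regular ∧ ∀ f : C(X, ℝ), ∫ x, f x ∂μ = P f := by
  let Λ : CompactlySupportedContinuousMap X ℝ →ₚ[ℝ] ℝ := PositiveLinearMap.mk₀
    { toFun := fun g => P g.toContinuousMap
      map_add' := fun f g => P.map_add f.toContinuousMap g.toContinuousMap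
      map_smul' := fun c f => P.map_smul c f.toContinuousMap }
    fun f hf => hP _ hf
  exact ⟨RealRMK.rieszMeasure Λ, inferInstance, inferInstance, fun f =>
    RealRMK.integral_rieszMeasure Λ (CompactlySupportedContinuousMap.continuousMapEquiv f)⟩

/-- A point outside the closure of a subspace is separated from it by a continuous functional
vanishing on the subspace. -/
theorem exists_clm_eq_zero_of_notMem_closure {E : Type*} [NormedAddCommGroup E]
    [NormedSpace ℝ E] (S : Submodule ℝ E) {g : E} (hg : g ∉ S.topologicalClosure) :
    ∃ L : E →L[ℝ] ℝ, (∀ s ∈ S, L s = 0) ∧ L g ≠ 0 := by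
  obtain ⟨L, u, hLu, hu⟩ := geometric_hahn_banach_closed_point
    S.topologicalClosure.convex S.isClosed_topologicalClosure hg
  have hu0 : 0 < u := by simpa using hLu 0 (zero_mem _)
  refine ⟨L, fun s hs => ?_, (hu0.trans hu).ne'⟩
  by_contra hne
  have h := hLu ((u / L s) • s) (S.le_topologicalClosure (S.smul_mem _ hs))
  rw [map_smul, smul_eq_mul, div_mul_cancel₀ _ hne] at h
  exact lt_irrefl _ h

theorem integrable_of_continuous_of_compactSpace {X : Type*} [TopologicalSpace X]
    [CompactSpace X] [MeasurableSpace X] [BorelSpace X] {E : Type*} [NormedAddCommGroup E]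
    {f : X → E} (hf : Continuous f) (μ : Measure X) [IsFiniteMeasure μ] : Integrable f μ :=
  hf.integrable_of_hasCompactSupport (HasCompactSupport.of_compactSpace f)

theorem svInt_toSignedMeasure_sub {X : Type*} [TopologicalSpace X] [CompactSpace X]
    [MeasurableSpace X] [BorelSpace X] {E : Type*} [NormedAddCommGroup E] [NormedSpace ℝ E]
    (μ ν : Measure X) [IsFiniteMeasure μ] [IsFiniteMeasure ν] {f : X → E} (hf : Continuous f) :
    svInt (μ.toSignedMeasure - ν.toSignedMeasure) f = ∫ x, f x ∂μ - ∫ x, f x ∂ν := by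
  set j := (μ.toSignedMeasure - ν.toSignedMeasure).toJordanDecomposition
  have hsub : j.posPart.toSignedMeasure - j.negPart.toSignedMeasure =
      μ.toSignedMeasure - ν.toSignedMeasure :=
    SignedMeasure.toSignedMeasure_toJordanDecomposition _
  have hadd : j.posPart + ν = μ + j.negPart := by
    rw [← Measure.toSignedMeasure_eq_toSignedMeasure_iff, Measure.toSignedMeasure_add,
      Measure.toSignedMeasure_add]
    exact sub_eq_sub_iff_add_eq_add.1 hsub
  have hint := congrArg (fun ρ : Measure X => ∫ x, f x ∂ρ) hadd
  simp only [integral_add_measure (integrable_of_continuous_of_compactSpace hf _)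
    (integrable_of_continuous_of_compactSpace hf _)] at hint
  exact sub_eq_sub_iff_add_eq_add.2 hint

theorem innerRegular_totalVariation_toSignedMeasure_sub {X : Type*} [TopologicalSpace X]
    [T2Space X] [MeasurableSpace X] [BorelSpace X] (μ ν : Measure X) [IsFiniteMeasure μ]
    [IsFiniteMeasure ν] [μ.Regular] [ν.Regular] :
    (μ.toSignedMeasure - ν.toSignedMeasure).totalVariation.InnerRegular := by
  refine innerRegular_of_le (ν := μ + ν) ?_
  rw [SignedMeasure.totalVariation, Measure.toJordanDecomposition_toSignedMeasure_sub]
  exact add_le_add Measure.sub_le Measure.sub_le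

/-- A kernel with jointly continuous values has a continuous feature map. -/
theorem continuous_featureMap {X : Type*} [TopologicalSpace X] {H : Type*}
    [NormedAddCommGroup H] [InnerProductSpace ℝ H] {Φ : X → H}
    (h : Continuous fun p : X × X => ⟪Φ p.1, Φ p.2⟫) : Continuous Φ := by
  refine continuous_iff_continuousAt.2 fun x => tendsto_iff_norm_sub_tendsto_zero.2 ?_
  have hnorm (y : X) : ‖Φ y - Φ x‖ = √(⟪Φ y, Φ y⟫ - 2 * ⟪Φ y, Φ x⟫ + ⟪Φ x, Φ x⟫) := by
    rw [real_inner_self_eq_norm_sq, real_inner_self_eq_norm_sq, ← norm_sub_sq_real,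
      Real.sqrt_sq (norm_nonneg _)]
  have hdiag : Continuous fun y => ⟪Φ y, Φ y⟫ := h.comp (continuous_id.prodMk continuous_id)
  have hright : Continuous fun y => ⟪Φ y, Φ x⟫ := h.comp (continuous_id.prodMk continuous_const)
  have hcont : Continuous fun y => ‖Φ y - Φ x‖ := by
    simp only [hnorm]
    fun_prop
  simpa using hcont.tendsto x

theorem inner_svInt {X : Type*} [TopologicalSpace X] [CompactSpace X] [MeasurableSpace X]
    [BorelSpace X] {H : Type*} [NormedAddCommGroup H] [InnerProductSpace ℝ H] [CompleteSpace H]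
    (μ : SignedMeasure X) {Φ : X → H} (hΦ : Continuous Φ) (f : H) :
    ⟪f, svInt μ Φ⟫ = svInt μ fun x => ⟪f, Φ x⟫ := by
  rw [svInt, svInt, inner_sub_right,
    integral_inner (integrable_of_continuous_of_compactSpace hΦ _),
    integral_inner (integrable_of_continuous_of_compactSpace hΦ _)]

theorem continuous_integral_continuousMap {X : Type*} [TopologicalSpace X] [CompactSpace X]
    [MeasurableSpace X] [BorelSpace X] (μ : Measure X) [IsFiniteMeasure μ] :
    Continuous fun f : C(X, ℝ) => ∫ x, f x ∂μ := by
  refine (LipschitzWith.of_dist_le_mul (K := (μ.real Set.univ).toNNReal) fun f g => ?_).continuous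
  rw [dist_eq_norm, ← integral_sub (integrable_of_continuous_of_compactSpace f.continuous μ)
    (integrable_of_continuous_of_compactSpace g.continuous μ),
    Real.coe_toNNReal _ measureReal_nonneg, mul_comm]
  refine norm_integral_le_of_norm_le_const (Eventually.of_forall fun x => ?_)
  rw [← dist_eq_norm]
  exact ContinuousMap.dist_apply_le_dist x

/-- Equality of the integrals of two finite measures passes to uniform limits. -/
theorem integral_eq_of_approx {X : Type*} [TopologicalSpace X] [CompactSpace X]
    [MeasurableSpace X] [BorelSpace X] (μ ν : Measure X) [IsFiniteMeasure μ] [IsFiniteMeasure ν]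
    (S : Set C(X, ℝ)) (hS : ∀ f ∈ S, ∫ x, f x ∂μ = ∫ x, f x ∂ν) {g : C(X, ℝ)}
    (hg : ∀ ε : ℝ, 0 < ε → ∃ f ∈ S, ∀ x, |f x - g x| ≤ ε) :
    ∫ x, g x ∂μ = ∫ x, g x ∂ν := by
  have hclosed : IsClosed {f : C(X, ℝ) | ∫ x, f x ∂μ = ∫ x, f x ∂ν} :=
    isClosed_eq (continuous_integral_continuousMap μ) (continuous_integral_continuousMap ν)
  refine hclosed.closure_subset_iff.2 hS (Metric.mem_closure_iff.2 fun ε hε => ?_)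
  obtain ⟨f, hfS, hf⟩ := hg (ε / 2) (half_pos hε)
  refine ⟨f, hfS, lt_of_le_of_lt ?_ (half_lt_self hε)⟩
  rw [dist_comm]
  exact (ContinuousMap.dist_le (half_pos hε).le).2 hf

/-- Let `X` be a compact Hausdorff space and `k` a continuous symmetric
positive definite kernel on `X` with RKHS `H` (realized by the injective linear map
`T : H →ₗ[ℝ] (X → ℝ)` and feature map `Φ` with `k x y = ⟪Φ x, Φ y⟫` and the reproducing
property `T f x = ⟪f, Φ x⟫`).  Then `k` is c-universal (its RKHS is uniformly dense in
`C(X)`) iff the embedding `μ ↦ ∫ k(·,x) dμ(x)` of the finite signed Radon measures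
into `H` is injective. -/
theorem stmt0
    {X : Type*} [TopologicalSpace X] [CompactSpace X] [T2Space X]
    [MeasurableSpace X] [BorelSpace X]
    (k : X → X → ℝ) (hkcont : Continuous fun p : X × X => k p.1 p.2)
    {H : Type*} [NormedAddCommGroup H] [InnerProductSpace ℝ H] [CompleteSpace H]
    (T : H →ₗ[ℝ] (X → ℝ)) (hT : Function.Injective T)
    (Φ : X → H)
    (hk : ∀ x y : X, k x y = ⟪Φ x, Φ y⟫)
    (hrepro : ∀ (f : H) (x : X), T f x = ⟪f, Φ x⟫) :
    (∀ (g : C(X, ℝ)) (ε : ℝ), 0 < ε → ∃ f : H, ∀ x : X, |T f x - g x| ≤ ε) ↔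
      ∀ μ : MeasureTheory.SignedMeasure X, μ.totalVariation.InnerRegular →
        svInt μ Φ = 0 → μ = 0 := by
  have hΦ : Continuous Φ := continuous_featureMap (by simpa only [hk] using hkcont)
  let T' : H →ₗ[ℝ] C(X, ℝ) :=
    { toFun := fun f => ⟨fun x => ⟪f, Φ x⟫, by fun_prop⟩
      map_add' := fun f g => by ext x; simp [inner_add_left]
      map_smul' := fun c f => by ext x; simp [real_inner_smul_left] }
  constructor
  · intro hdense μ hμ hzero
    set j := μ.toJordanDecomposition
    have hpos : j.posPart.InnerRegular :=
      innerRegular_of_le (ν := μ.totalVariation) (Measure.le_add_right le_rfl)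
    have hneg : j.negPart.InnerRegular :=
      innerRegular_of_le (ν := μ.totalVariation) (Measure.le_add_left le_rfl)
    have heq : j.posPart = j.negPart := by
      refine Measure.ext_of_integral_eq_on_compactlySupported fun g => ?_
      refine integral_eq_of_approx j.posPart j.negPart (Set.range T') ?_
        (g := g.toContinuousMap) fun ε hε => ?_
      · rintro _ ⟨f, rfl⟩
        have h := inner_svInt μ hΦ f
        rw [hzero, inner_zero_right] at h
        exact sub_eq_zero.1 h.symm
      · obtain ⟨f, hf⟩ := hdense g.toContinuousMap ε hε
        exact ⟨T' f, ⟨f, rfl⟩, fun x => (hrepro f x ▸ hf x :)⟩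
    rw [← SignedMeasure.toSignedMeasure_toJordanDecomposition μ,
      JordanDecomposition.toSignedMeasure, sub_eq_zero]
    exact Measure.toSignedMeasure_congr heq
  · intro hinj g ε hε
    by_cases hg : g ∈ (LinearMap.range T').topologicalClosure
    · obtain ⟨_, ⟨f, rfl⟩, hf⟩ := Metric.mem_closure_iff.1 hg ε hε
      refine ⟨f, fun x => ?_⟩
      rw [hrepro, ← Real.dist_eq]
      exact (ContinuousMap.dist_apply_le_dist (f := T' f) x).trans (dist_comm g _ ▸ hf.le)
    · exfalso
      obtain ⟨L, hLT, hLg⟩ := exists_clm_eq_zero_of_notMem_closure _ hg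
      obtain ⟨P, Q, hP, hQ, hL⟩ := exists_nonneg_sub_nonneg L
      obtain ⟨μ, _, _, hμ⟩ := exists_regular_integral_eq P hP
      obtain ⟨ν, _, _, hν⟩ := exists_regular_integral_eq Q hQ
      have hLint (f : C(X, ℝ)) : svInt (μ.toSignedMeasure - ν.toSignedMeasure) f = L f := by
        rw [svInt_toSignedMeasure_sub μ ν f.continuous, hμ, hν, hL]
      have hzero : μ.toSignedMeasure - ν.toSignedMeasure = 0 := by
        refine hinj _ (innerRegular_totalVariation_toSignedMeasure_sub μ ν)
          (ext_inner_left ℝ fun f => ?_)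
        rw [inner_svInt _ hΦ, inner_zero_right]
        exact (hLint (T' f)).trans (hLT _ ⟨f, rfl⟩)
      refine hLg ((hLint g).symm.trans ?_)
      rw [hzero, svInt, SignedMeasure.toJordanDecomposition_zero]
      simp
end

section
/- Let X be a locally compact Hausdorff space and let k be a symmetric positive definite kernel on X that is bounded and continuous on X × X, with RKHS H. Then k is cc-universal if and only if the embedding μ ↦ ∫_X k(·,x) dμ(x) from M_bc(X) into H is injective, i.e., ∫_X k(·,x) dμ(x) = 0 implies μ = 0 for every μ ∈ M_bc(X). -/
open MeasureTheory Filter Topology RealInnerProductSpace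

open scoped NNReal ENNReal CompactlySupported

section PositivePart

open CompactlySupportedContinuousMap

variable {X : Type*} [TopologicalSpace X]

/-- The positive part of a functional on `C_c(X, ℝ)`, on nonnegative functions: the supremum of its
values over the order interval `[0, f]`. -/
noncomputable def functionalPosPart (L : C_c(X, ℝ) →ₗ[ℝ] ℝ) (f : C_c(X, ℝ≥0)) : ℝ :=
  sSup ((fun g : C_c(X, ℝ≥0) => L g.toReal) '' Set.Iic f)

variable {L : C_c(X, ℝ) →ₗ[ℝ] ℝ}

lemma le_functionalPosPart
    (hL : ∀ f : C_c(X, ℝ≥0), BddAbove ((fun g : C_c(X, ℝ≥0) => L g.toReal) '' Set.Iic f))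
    {f g : C_c(X, ℝ≥0)} (hg : g ≤ f) :
    L g.toReal ≤ functionalPosPart L f :=
  le_csSup (hL f) ⟨g, hg, rfl⟩

lemma functionalPosPart_le {f : C_c(X, ℝ≥0)} {a : ℝ}
    (h : ∀ g : C_c(X, ℝ≥0), g ≤ f → L g.toReal ≤ a) : functionalPosPart L f ≤ a := by
  refine csSup_le ⟨_, f, le_refl f, rfl⟩ ?_
  rintro _ ⟨g, hg, rfl⟩
  exact h g hg

lemma functionalPosPart_nonneg
    (hL : ∀ f : C_c(X, ℝ≥0), BddAbove ((fun g : C_c(X, ℝ≥0) => L g.toReal) '' Set.Iic f))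
    (f : C_c(X, ℝ≥0)) : 0 ≤ functionalPosPart L f := by
  have h0 : (0 : C_c(X, ℝ≥0)).toReal = 0 := by ext; simp
  have := le_functionalPosPart hL (f := f) (g := 0) (fun x => by simp)
  rwa [h0, map_zero] at this

lemma functionalPosPart_add
    (hL : ∀ f : C_c(X, ℝ≥0), BddAbove ((fun g : C_c(X, ℝ≥0) => L g.toReal) '' Set.Iic f))
    (f₁ f₂ : C_c(X, ℝ≥0)) :
    functionalPosPart L (f₁ + f₂) = functionalPosPart L f₁ + functionalPosPart L f₂ := by
  apply le_antisymm
  · refine functionalPosPart_le fun g hg => ?_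
    obtain ⟨g₂, hg₂⟩ := CompactlySupportedContinuousMap.exists_add_of_le
      (f₁ := g ⊓ f₁) (f₂ := g) (fun x => inf_le_left)
    have hle : g₂ ≤ f₂ := by
      intro x
      have h1 : min (g x) (f₁ x) + g₂ x = g x := congrArg (fun h : C_c(X, ℝ≥0) => h x) hg₂
      have h2 : g x ≤ f₁ x + f₂ x := hg x
      change g₂ x ≤ f₂ x
      rcases le_total (g x) (f₁ x) with h | h
      · rw [min_eq_left h] at h1
        have : g₂ x = 0 := by simpa using h1
        simp [this]
      · rw [min_eq_right h] at h1
        rw [← h1] at h2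
        exact le_of_add_le_add_left h2
    rw [← hg₂, toReal_add, map_add]
    exact add_le_add (le_functionalPosPart hL (fun x => inf_le_right))
      (le_functionalPosPart hL hle)
  · rw [← le_sub_iff_add_le]
    refine functionalPosPart_le fun g₁ hg₁ => ?_
    rw [le_sub_comm]
    refine functionalPosPart_le fun g₂ hg₂ => ?_
    rw [le_sub_iff_add_le, add_comm, ← map_add, ← toReal_add]
    exact le_functionalPosPart hL (fun x => add_le_add (hg₁ x) (hg₂ x))

lemma functionalPosPart_smul
    (hL : ∀ f : C_c(X, ℝ≥0), BddAbove ((fun g : C_c(X, ℝ≥0) => L g.toReal) '' Set.Iic f))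
    (c : ℝ≥0) (f : C_c(X, ℝ≥0)) :
    functionalPosPart L (c • f) = c * functionalPosPart L f := by
  have key : ∀ (c : ℝ≥0) (_ : c ≠ 0) (f : C_c(X, ℝ≥0)),
      functionalPosPart L f ≤ (c : ℝ)⁻¹ * functionalPosPart L (c • f) := by
    intro c hc f
    refine functionalPosPart_le fun g hg => ?_
    have hc' : (0 : ℝ) < c := by positivity
    rw [← mul_le_mul_iff_right₀ hc', mul_inv_cancel_left₀ hc'.ne']
    have : (c : ℝ) * L g.toReal = L (c • g).toReal := by
      rw [toReal_smul, NNReal.smul_def, map_smul, smul_eq_mul]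
    rw [this]
    exact le_functionalPosPart hL (fun x => mul_le_mul_right (hg x) c)
  rcases eq_or_ne c 0 with rfl | hc
  · have h := functionalPosPart_add hL 0 0
    have h0 : functionalPosPart L 0 = 0 := by simpa using h
    simp [h0]
  · have hc' : (0 : ℝ) < c := by positivity
    apply le_antisymm
    · have := key c⁻¹ (inv_ne_zero hc) (c • f)
      rwa [inv_smul_smul₀ hc, NNReal.coe_inv, inv_inv] at this
    · have := key c hc f
      rwa [← mul_le_mul_iff_right₀ hc', mul_inv_cancel_left₀ hc'.ne'] at this

/-- An order bounded functional on `C_c(X, ℝ)` is a difference of two positive functionals. -/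
lemma exists_eq_sub_of_orderBounded
    (hL : ∀ f : C_c(X, ℝ≥0), BddAbove ((fun g : C_c(X, ℝ≥0) => L g.toReal) '' Set.Iic f)) :
    ∃ P N : C_c(X, ℝ≥0) →ₗ[ℝ≥0] ℝ≥0, ∀ f : C_c(X, ℝ≥0), L f.toReal = P f - N f := by
  refine ⟨⟨⟨fun f => ⟨functionalPosPart L f, functionalPosPart_nonneg hL f⟩, ?_⟩, ?_⟩,
    ⟨⟨fun f => ⟨functionalPosPart L f - L f.toReal,
      sub_nonneg.2 (le_functionalPosPart hL le_rfl)⟩, ?_⟩, ?_⟩, ?_⟩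
  · intro f g
    exact NNReal.eq (functionalPosPart_add hL f g)
  · intro c f
    exact NNReal.eq (functionalPosPart_smul hL c f)
  · intro f g
    apply NNReal.eq
    change functionalPosPart L (f + g) - L (f + g).toReal =
      (functionalPosPart L f - L f.toReal) + (functionalPosPart L g - L g.toReal)
    rw [functionalPosPart_add hL, toReal_add, map_add]
    ring
  · intro c f
    apply NNReal.eq
    change functionalPosPart L (c • f) - L (c • f).toReal =
      c * (functionalPosPart L f - L f.toReal)
    rw [functionalPosPart_smul hL, toReal_smul, NNReal.smul_def, map_smul, smul_eq_mul]
    ring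
  · intro f
    exact (sub_sub_cancel (functionalPosPart L f) (L f.toReal)).symm

end PositivePart

/-- The **Riesz representation theorem** for bounded functionals on `C(Z, ℝ)`, `Z` compact. -/
lemma exists_integral_sub_integral_eq {Z : Type*} [TopologicalSpace Z] [T2Space Z]
    [CompactSpace Z] [MeasurableSpace Z] [BorelSpace Z] (φ : C(Z, ℝ) →L[ℝ] ℝ) :
    ∃ p n : Measure Z, IsFiniteMeasure p ∧ IsFiniteMeasure n ∧ p.Regular ∧ n.Regular ∧
      ∀ g : C(Z, ℝ), φ g = ∫ z, g z ∂p - ∫ z, g z ∂n := by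
  let L : C_c(Z, ℝ) →ₗ[ℝ] ℝ :=
    { toFun := fun f => φ f.toContinuousMap
      map_add' := fun f g => φ.map_add f.toContinuousMap g.toContinuousMap
      map_smul' := fun c f => φ.map_smul c f.toContinuousMap }
  have hL : ∀ f : C_c(Z, ℝ≥0),
      BddAbove ((fun g : C_c(Z, ℝ≥0) => L g.toReal) '' Set.Iic f) := by
    intro f
    refine ⟨‖φ‖ * ‖f.toReal.toContinuousMap‖, ?_⟩
    rintro _ ⟨g, hg, rfl⟩
    refine (le_abs_self _).trans ((φ.le_opNorm g.toReal.toContinuousMap).trans ?_)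
    gcongr
    refine (ContinuousMap.norm_le _ (norm_nonneg _)).2 fun z => ?_
    refine le_trans ?_ (f.toReal.toContinuousMap.norm_coe_le_norm z)
    have h : (g z : ℝ) ≤ f z := NNReal.coe_le_coe.2 (hg z)
    simpa using h
  obtain ⟨P, N, hPN⟩ := exists_eq_sub_of_orderBounded hL
  refine ⟨NNRealRMK.rieszMeasure P, NNRealRMK.rieszMeasure N, inferInstance, inferInstance,
    inferInstance, inferInstance, fun g => ?_⟩
  let G : C_c(Z, ℝ) := ⟨g, HasCompactSupport.of_compactSpace _⟩
  have hint : ∀ (ν : Measure Z) [IsFiniteMeasureOnCompacts ν],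
      ∫ z, g z ∂ν = ∫ z, (G.nnrealPart z : ℝ) ∂ν - ∫ z, ((-G).nnrealPart z : ℝ) ∂ν := by
    intro ν _
    have := integral_eq_integral_pos_part_sub_integral_neg_part (f := G) (μ := ν) G.integrable
    exact this
  have hφ : φ g = L G.nnrealPart.toReal - L (-G).nnrealPart.toReal := by
    rw [← map_sub, CompactlySupportedContinuousMap.nnrealPart_sub_nnrealPart_neg]
    rfl
  rw [hφ, hint, hint, hPN, hPN]
  simp only [NNRealRMK.integral_rieszMeasure]
  ring

/-- A measure dominated by a finite inner regular measure is inner regular. -/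
lemma MeasureTheory.Measure.InnerRegular.of_le {X : Type*} [TopologicalSpace X] [T2Space X]
    [MeasurableSpace X] [OpensMeasurableSpace X] {μ ν : Measure X} [IsFiniteMeasure μ]
    (hμ : μ.InnerRegular) (h : ν ≤ μ) : ν.InnerRegular := by
  refine ⟨fun A hA r hr => ?_⟩
  have hpos : ν A - r ≠ 0 := (tsub_pos_of_lt hr).ne'
  obtain ⟨K, hKA, hK, hlt⟩ := hA.exists_isCompact_sdiff_lt (measure_ne_top μ A) hpos
  refine ⟨K, hKA, hK, ?_⟩
  have h1 : ν A = ν K + ν (A \ K) := by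
    rw [add_comm, measure_sdiff_add_inter A hK.measurableSet |>.symm.trans ?_]
    rw [Set.inter_eq_right.2 hKA]
  by_contra! hcon
  have hfin : ν (A \ K) < ν A - r := (h _).trans_lt hlt
  have : ν A < ν A := by
    calc ν A = ν K + ν (A \ K) := h1
      _ ≤ r + ν (A \ K) := by gcongr
      _ < r + (ν A - r) := ENNReal.add_lt_add_left hr.ne_top hfin
      _ = ν A := add_tsub_cancel_of_le hr.le
  exact lt_irrefl _ this

lemma totalVariation_toSignedMeasure_sub_le {X : Type*} [MeasurableSpace X] (p n : Measure X)
    [IsFiniteMeasure p] [IsFiniteMeasure n] :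
    (p.toSignedMeasure - n.toSignedMeasure).totalVariation ≤ p + n := by
  rw [SignedMeasure.totalVariation, Measure.toJordanDecomposition_toSignedMeasure_sub]
  exact add_le_add Measure.sub_le Measure.sub_le

lemma svInt_toSignedMeasure_sub_s1 {X : Type*} [MeasurableSpace X] {E : Type*}
    [NormedAddCommGroup E] [NormedSpace ℝ E] (p n : Measure X) [IsFiniteMeasure p]
    [IsFiniteMeasure n] {f : X → E} (hp : Integrable f p) (hn : Integrable f n) :
    svInt (p.toSignedMeasure - n.toSignedMeasure) f = ∫ x, f x ∂p - ∫ x, f x ∂n := by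
  have hadd : (p - n) + n = (n - p) + p := by
    rw [← Measure.toSignedMeasure_eq_toSignedMeasure_iff, Measure.toSignedMeasure_add,
      Measure.toSignedMeasure_add]
    have := Measure.sub_toSignedMeasure_eq_toSignedMeasure_sub (μ := p) (ν := n)
    rw [sub_eq_sub_iff_add_eq_add] at this
    rw [← this, add_comm]
  have hint := congrArg (fun ν : Measure X => ∫ x, f x ∂ν) hadd
  rw [integral_add_measure (hp.mono_measure Measure.sub_le) hn,
    integral_add_measure (hn.mono_measure Measure.sub_le) hp] at hint
  rw [svInt, Measure.toJordanDecomposition_toSignedMeasure_sub,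
    Measure.jordanDecompositionOfToSignedMeasureSub_posPart,
    Measure.jordanDecompositionOfToSignedMeasureSub_negPart, sub_eq_sub_iff_add_eq_add, hint, add_comm]

/-- A linear map has dense range if only the zero functional annihilates its range. -/
lemma denseRange_of_forall_dual {V E : Type*} [AddCommGroup V] [Module ℝ V]
    [NormedAddCommGroup E] [NormedSpace ℝ E] (R : V →ₗ[ℝ] E)
    (h : ∀ φ : E →L[ℝ] ℝ, (∀ v, φ (R v) = 0) → φ = 0) : DenseRange R := by
  intro x
  by_contra hx
  have hconv : Convex ℝ (closure (Set.range R)) := by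
    have := (LinearMap.range R).convex (𝕜 := ℝ)
    exact LinearMap.coe_range R ▸ this.closure
  obtain ⟨φ, u, hu, hux⟩ := geometric_hahn_banach_closed_point hconv isClosed_closure hx
  have hlt : ∀ v, φ (R v) < u := fun v => hu _ (subset_closure ⟨v, rfl⟩)
  have hu0 : 0 < u := by simpa using hlt 0
  have hφ : φ = 0 := by
    refine h φ fun v => ?_
    by_contra hne
    have := hlt ((u / φ (R v)) • v)
    rw [map_smul, map_smul, smul_eq_mul, div_mul_cancel₀ _ hne] at this
    exact lt_irrefl _ this
  rw [hφ] at hux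
  exact absurd hux (by simpa using hu0.le)

lemma integrable_of_continuous_of_bounded_of_compact {X : Type*} [TopologicalSpace X] [T2Space X]
    [MeasurableSpace X] [BorelSpace X] {E : Type*} [NormedAddCommGroup E] {ν : Measure X}
    [IsFiniteMeasure ν] {f : X → E} (hf : Continuous f) {C : ℝ}
    (hC : ∀ x, ‖f x‖ ≤ C) {K : Set X} (hK : IsCompact K) (hν : ν Kᶜ = 0) : Integrable f ν := by
  refine Integrable.of_bound ?_ C (ae_of_all _ hC)
  have := hf.continuousOn.aestronglyMeasurable_of_isCompact (μ := ν) hK hK.measurableSet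
  rwa [Measure.restrict_eq_self_of_ae_mem (mem_ae_iff.2 hν)] at this

lemma continuous_of_continuous_inner {X H : Type*} [TopologicalSpace X] [NormedAddCommGroup H]
    [InnerProductSpace ℝ H] {Φ : X → H} (h : Continuous fun p : X × X => ⟪Φ p.1, Φ p.2⟫) :
    Continuous Φ := by
  rw [continuous_iff_continuousAt]
  intro x
  rw [ContinuousAt, tendsto_iff_norm_sub_tendsto_zero]
  have hsq : ∀ y, ‖Φ y - Φ x‖ = √(⟪Φ y, Φ y⟫ - 2 * ⟪Φ y, Φ x⟫ + ⟪Φ x, Φ x⟫) := by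
    intro y
    rw [real_inner_self_eq_norm_sq, real_inner_self_eq_norm_sq, ← norm_sub_sq_real,
      Real.sqrt_sq (norm_nonneg _)]
  simp_rw [hsq]
  have h1 : Continuous fun y => ⟪Φ y, Φ y⟫ := h.comp (continuous_id.prodMk continuous_id)
  have h2 : Continuous fun y => ⟪Φ y, Φ x⟫ := h.comp (continuous_id.prodMk continuous_const)
  have h3 : Continuous fun y => √(⟪Φ y, Φ y⟫ - 2 * ⟪Φ y, Φ x⟫ + ⟪Φ x, Φ x⟫) := by fun_prop
  have h4 := h3.tendsto x
  have h5 : ⟪Φ x, Φ x⟫ - 2 * ⟪Φ x, Φ x⟫ + ⟪Φ x, Φ x⟫ = 0 := by ring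
  rwa [h5, Real.sqrt_zero] at h4

/-- If the functions `⟪f, Φ ·⟫` approximate every continuous function on a compact set `K`, then
they separate the finite Radon measures carried by `K`. -/
lemma measure_eq_of_integral_eq {X : Type*} [TopologicalSpace X] [T2Space X]
    [LocallyCompactSpace X] [MeasurableSpace X] [BorelSpace X]
    {H : Type*} [NormedAddCommGroup H] [InnerProductSpace ℝ H] [CompleteSpace H]
    {Φ : X → H} {p n : Measure X} [IsFiniteMeasure p] [IsFiniteMeasure n]
    [p.Regular] [n.Regular] {K : Set X} (hpK : p Kᶜ = 0) (hnK : n Kᶜ = 0)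
    (happrox : ∀ (g : C(K, ℝ)) (ε : ℝ), 0 < ε → ∃ f : H, ∀ x : K, |⟪f, Φ x⟫ - g x| ≤ ε)
    (hp : Integrable Φ p) (hn : Integrable Φ n)
    (heq : ∫ x, Φ x ∂p = ∫ x, Φ x ∂n) : p = n := by
  refine Measure.ext_of_integral_eq_on_compactlySupported fun g => ?_
  have key : ∀ ε : ℝ, 0 < ε →
      |∫ x, g x ∂p - ∫ x, g x ∂n| ≤ ε * (p.real Set.univ + n.real Set.univ) := by
    intro ε hε
    obtain ⟨f, hf⟩ := happrox (g.toContinuousMap.restrict K) ε hε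
    have hbound : ∀ ν : Measure X, IsFiniteMeasure ν → ν.Regular → ν Kᶜ = 0 → Integrable Φ ν →
        |⟪f, ∫ x, Φ x ∂ν⟫ - ∫ x, g x ∂ν| ≤ ε * ν.real Set.univ := by
      intro ν _ _ hνK hν
      rw [← integral_inner hν f,
        ← integral_sub (hν.const_inner f) (g.integrable (μ := ν)),
        ← Real.norm_eq_abs]
      refine norm_integral_le_of_norm_le_const ?_
      filter_upwards [mem_ae_iff.2 hνK] with x hx
      exact hf ⟨x, hx⟩
    have h1 := hbound p inferInstance inferInstance hpK hp
    have h2 := hbound n inferInstance inferInstance hnK hn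
    rw [heq] at h1
    rw [abs_le] at *
    constructor <;> linarith [h1.1, h1.2, h2.1, h2.2]
  set M := p.real Set.univ + n.real Set.univ
  have hM0 : 0 ≤ M := by positivity
  have hzero : |∫ x, g x ∂p - ∫ x, g x ∂n| ≤ 0 := by
    refine le_of_forall_pos_le_add fun δ hδ => ?_
    refine (key (δ / (M + 1)) (by positivity)).trans ?_
    rw [zero_add, div_mul_eq_mul_div, div_le_iff₀ (by positivity)]
    nlinarith
  exact sub_eq_zero.1 (abs_nonpos_iff.1 hzero)

/-- Let `X` be a locally compact Hausdorff space and `k` a bounded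
continuous symmetric positive definite kernel on `X` with RKHS `H`.  Then `k` is
cc-universal (its RKHS is dense in `C(X)` in the topology of compact convergence) iff the
embedding `μ ↦ ∫ k(·,x) dμ(x)` of the compactly supported finite signed Radon measures
into `H` is injective. -/
theorem stmt1
    {X : Type*} [TopologicalSpace X] [T2Space X] [LocallyCompactSpace X]
    [MeasurableSpace X] [BorelSpace X]
    (k : X → X → ℝ) (hkcont : Continuous fun p : X × X => k p.1 p.2)
    (hkbdd : ∃ C : ℝ, ∀ x y : X, |k x y| ≤ C)
    {H : Type*} [NormedAddCommGroup H] [InnerProductSpace ℝ H] [CompleteSpace H]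
    (T : H →ₗ[ℝ] (X → ℝ)) (hT : Function.Injective T)
    (Φ : X → H)
    (hk : ∀ x y : X, k x y = ⟪Φ x, Φ y⟫)
    (hrepro : ∀ (f : H) (x : X), T f x = ⟪f, Φ x⟫) :
    (∀ (Z : Set X), IsCompact Z → ∀ (g : C(Z, ℝ)) (ε : ℝ), 0 < ε →
        ∃ f : H, ∀ x : Z, |T f (x : X) - g x| ≤ ε) ↔
      ∀ μ : MeasureTheory.SignedMeasure X, μ.totalVariation.InnerRegular →
        (∃ K : Set X, IsCompact K ∧ μ.totalVariation Kᶜ = 0) →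
        svInt μ Φ = 0 → μ = 0 := by
  have hΦ : Continuous Φ := continuous_of_continuous_inner (by simpa only [hk] using hkcont)
  obtain ⟨C, hC⟩ := hkbdd
  have hΦC : ∀ x, ‖Φ x‖ ≤ √C := by
    intro x
    apply Real.le_sqrt_of_sq_le
    rw [← real_inner_self_eq_norm_sq, ← hk]
    exact (le_abs_self _).trans (hC x x)
  constructor
  · rintro huniv μ hreg ⟨K, hK, hμK⟩ hμ
    set p := μ.toJordanDecomposition.posPart
    set n := μ.toJordanDecomposition.negPart
    have htv : μ.totalVariation = p + n := rfl
    have hple : p ≤ μ.totalVariation := htv ▸ Measure.le_add_right le_rfl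
    have hnle : n ≤ μ.totalVariation := htv ▸ Measure.le_add_left le_rfl
    have : IsFiniteMeasure μ.totalVariation := by rw [htv]; infer_instance
    have := hreg.of_le hple
    have := hreg.of_le hnle
    have hpK : p Kᶜ = 0 := Measure.absolutelyContinuous_of_le hple hμK
    have hnK : n Kᶜ = 0 := Measure.absolutelyContinuous_of_le hnle hμK
    have hpn : p = n := by
      refine measure_eq_of_integral_eq hpK hnK ?_
        (integrable_of_continuous_of_bounded_of_compact hΦ hΦC hK hpK)
        (integrable_of_continuous_of_bounded_of_compact hΦ hΦC hK hnK) (sub_eq_zero.1 hμ)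
      simpa only [hrepro] using huniv K hK
    rw [← μ.toSignedMeasure_toJordanDecomposition, JordanDecomposition.toSignedMeasure, sub_eq_zero,
      Measure.toSignedMeasure_eq_toSignedMeasure_iff]
    exact hpn
  · intro hinj Z hZ g ε hε
    have : CompactSpace Z := isCompact_iff_compactSpace.1 hZ
    let R : H →ₗ[ℝ] C(Z, ℝ) :=
      { toFun := fun f => ⟨fun z => ⟪f, Φ z⟫, by fun_prop⟩
        map_add' := fun f f' => by ext z; simp [inner_add_left]
        map_smul' := fun c f => by ext z; simp [real_inner_smul_left] }
    have hdense : DenseRange R := by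
      refine denseRange_of_forall_dual R fun φ hφ => ?_
      obtain ⟨p, n, _, _, _, _, hpn⟩ := exists_integral_sub_integral_eq φ
      have hval : MeasurableEmbedding (Subtype.val : Z → X) :=
        MeasurableEmbedding.subtype_coe hZ.measurableSet
      have hnull : ∀ ν : Measure Z, ν.map Subtype.val Zᶜ = 0 := by
        intro ν
        rw [hval.map_apply]
        simp
      have hint : ∀ ν : Measure Z, IsFiniteMeasure ν → Integrable Φ (ν.map Subtype.val) :=
        fun ν _ => integrable_of_continuous_of_bounded_of_compact hΦ hΦC hZ (hnull ν)
      have hregp : (p.map (Subtype.val : Z → X)).InnerRegular :=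
        Measure.InnerRegular.map_of_continuous continuous_subtype_val
      have hregn : (n.map (Subtype.val : Z → X)).InnerRegular :=
        Measure.InnerRegular.map_of_continuous continuous_subtype_val
      have htv := totalVariation_toSignedMeasure_sub_le
        (p.map (Subtype.val : Z → X)) (n.map (Subtype.val : Z → X))
      have hzero := hinj ((p.map (Subtype.val : Z → X)).toSignedMeasure -
        (n.map (Subtype.val : Z → X)).toSignedMeasure)
        (Measure.InnerRegular.of_le inferInstance htv)
        ⟨Z, hZ, Measure.absolutelyContinuous_of_le htv (by simp [hnull])⟩ ?_
      · rw [sub_eq_zero, Measure.toSignedMeasure_eq_toSignedMeasure_iff] at hzero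
        have hpn' : p = n := by
          rw [← hval.comap_map p, hzero, hval.comap_map]
        ext g
        simp [hpn, hpn']
      · rw [svInt_toSignedMeasure_sub_s1 _ _ (hint p inferInstance) (hint n inferInstance)]
        refine ext_inner_left ℝ fun f => ?_
        rw [inner_zero_right, inner_sub_right, ← integral_inner (hint p inferInstance),
          ← integral_inner (hint n inferInstance), hval.integral_map, hval.integral_map, ← hφ f,
          hpn]
        rfl
    obtain ⟨f, hf⟩ := hdense.exists_dist_lt g hε
    refine ⟨f, fun z => ?_⟩
    rw [hrepro, ← Real.dist_eq, dist_comm]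
    exact (ContinuousMap.dist_apply_le_dist z).trans hf.le
end

section
/- Let X be a locally compact Hausdorff space and let k be a symmetric positive definite kernel on X that is bounded and continuous on X × X, with RKHS H. If k is cc-universal, then k is strictly positive definite. In particular, a c-universal kernel on a compact Hausdorff space and a c0-universal kernel (bounded with k(·,x) ∈ C_0(X) for all x) on a locally compact Hausdorff space are strictly positive definite. -/
open MeasureTheory Filter Topology RealInnerProductSpace
open scoped ZeroAtInfty

/-- A symmetric kernel `k` is strictly positive definite if for every `n`, mutually
distinct `x₁,…,xₙ` and real `α₁,…,αₙ` not all zero, `∑_{l,j} α_l α_j k(x_l,x_j) > 0`. -/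
def StrictlyPD {X : Type*} (k : X → X → ℝ) : Prop :=
  ∀ (n : ℕ) (x : Fin n → X), Function.Injective x →
    ∀ α : Fin n → ℝ, α ≠ 0 → 0 < ∑ l, ∑ j, α l * α j * k (x l) (x j)

/-- If the point evaluations `⟪·, Φ y⟫` can be prescribed approximately as `1` at a point and `0`
on a finite set avoiding it, then the kernel with feature map `Φ` is strictly positive definite. -/
theorem strictlyPD_of_approx_indicator {X H : Type*} [NormedAddCommGroup H]
    [InnerProductSpace ℝ H] {k : X → X → ℝ} {Φ : X → H} (hk : ∀ x y, k x y = ⟪Φ x, Φ y⟫)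
    (happrox : ∀ (a : X) (F : Set X), F.Finite → a ∉ F → ∀ ε : ℝ, 0 < ε →
      ∃ f : H, |⟪f, Φ a⟫ - 1| ≤ ε ∧ ∀ y ∈ F, |⟪f, Φ y⟫| ≤ ε) :
    StrictlyPD k := by
  classical
  intro n x hx α hα
  have hsum : ∑ l, ∑ j, α l * α j * k (x l) (x j) = ‖∑ l, α l • Φ (x l)‖ ^ 2 := by
    rw [← real_inner_self_eq_norm_sq, sum_inner]
    refine Finset.sum_congr rfl fun l _ => ?_
    rw [inner_sum]
    refine Finset.sum_congr rfl fun j _ => ?_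
    rw [real_inner_smul_left, real_inner_smul_right, hk, mul_assoc]
  rw [hsum]
  refine pow_pos (norm_pos_iff.mpr fun hzero => ?_) 2
  obtain ⟨i, hi⟩ := Function.ne_iff.mp hα
  have hαi : 0 < |α i| := abs_pos.mpr hi
  have hle : |α i| ≤ ∑ l, |α l| :=
    Finset.single_le_sum (f := fun l => |α l|) (fun l _ => abs_nonneg _) (Finset.mem_univ i)
  have hpos : 0 < ∑ l, |α l| := hαi.trans_le hle
  obtain ⟨f, hfi, hf⟩ := happrox (x i) (x '' {i}ᶜ) (Set.toFinite _)
    (by rintro ⟨j, hj, hji⟩; exact hj (hx hji)) (|α i| / (2 * ∑ l, |α l|)) (by positivity)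
  have hpair : ∑ l, α l * ⟪f, Φ (x l)⟫ = 0 := by
    simpa [inner_sum, real_inner_smul_right] using congrArg (fun v => ⟪f, v⟫) hzero
  have hdiff : α i = ∑ l, α l * ((if l = i then 1 else 0) - ⟪f, Φ (x l)⟫) := by
    simp [mul_sub, Finset.sum_sub_distrib, hpair]
  have hbound : |α i| ≤ ∑ l, |α l| * (|α i| / (2 * ∑ l, |α l|)) := by
    conv_lhs => rw [hdiff]
    refine (Finset.abs_sum_le_sum_abs _ _).trans (Finset.sum_le_sum fun l _ => ?_)
    rw [abs_mul]
    refine mul_le_mul_of_nonneg_left ?_ (abs_nonneg _)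
    by_cases hl : l = i
    · subst hl
      simpa [abs_sub_comm] using hfi
    · simpa [hl] using hf (x l) ⟨l, hl, rfl⟩
  rw [← Finset.sum_mul] at hbound
  have hhalf : (∑ l, |α l|) * (|α i| / (2 * ∑ l, |α l|)) = |α i| / 2 := by
    field_simp
  linarith

/-- In a locally compact Hausdorff space, a point is separated from a finite set avoiding it by a
continuous function with compact support. -/
theorem exists_hasCompactSupport_one_zero_of_finite {X : Type*} [TopologicalSpace X] [T2Space X]
    [LocallyCompactSpace X] {a : X} {F : Set X} (hF : F.Finite) (ha : a ∉ F) :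
    ∃ g : C(X, ℝ), HasCompactSupport g ∧ g a = 1 ∧ ∀ y ∈ F, g y = 0 := by
  obtain ⟨g, hone, hzero, hsupp, -⟩ := exists_continuous_one_zero_of_isCompact
    (isCompact_singleton (x := a)) hF.isClosed (Set.disjoint_singleton_left.mpr ha)
  exact ⟨g, hsupp, hone rfl, fun y hy => hzero hy⟩

/-- A cc-universal kernel (bounded, continuous, on a locally compact
Hausdorff space) is strictly positive definite; in particular, a c-universal kernel on a
compact Hausdorff space, and a c₀-universal kernel (bounded, with `k(·,x) ∈ C₀(X)`) on a
locally compact Hausdorff space, are strictly positive definite.  In each case the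
RKHS `H` of `k` is presented by an injective linear map `T : H →ₗ[ℝ] (X → ℝ)` and a
feature map `Φ` with `k x y = ⟪Φ x, Φ y⟫` and `T f x = ⟪f, Φ x⟫`. -/
theorem stmt6 :
    (∀ (X : Type) [TopologicalSpace X] [T2Space X] [LocallyCompactSpace X]
        (k : X → X → ℝ), (Continuous fun p : X × X => k p.1 p.2) →
        (∃ C : ℝ, ∀ x y : X, |k x y| ≤ C) →
        ∀ (H : Type) [NormedAddCommGroup H] [InnerProductSpace ℝ H] [CompleteSpace H]
          (T : H →ₗ[ℝ] (X → ℝ)) (Φ : X → H),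
          Function.Injective T →
          (∀ x y : X, k x y = ⟪Φ x, Φ y⟫) →
          (∀ (f : H) (x : X), T f x = ⟪f, Φ x⟫) →
          (∀ (Z : Set X), IsCompact Z → ∀ (g : C(Z, ℝ)) (ε : ℝ), 0 < ε →
            ∃ f : H, ∀ x : Z, |T f (x : X) - g x| ≤ ε) →
          StrictlyPD k) ∧
    (∀ (X : Type) [TopologicalSpace X] [CompactSpace X] [T2Space X]
        (k : X → X → ℝ), (Continuous fun p : X × X => k p.1 p.2) →
        ∀ (H : Type) [NormedAddCommGroup H] [InnerProductSpace ℝ H] [CompleteSpace H]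
          (T : H →ₗ[ℝ] (X → ℝ)) (Φ : X → H),
          Function.Injective T →
          (∀ x y : X, k x y = ⟪Φ x, Φ y⟫) →
          (∀ (f : H) (x : X), T f x = ⟪f, Φ x⟫) →
          (∀ (g : C(X, ℝ)) (ε : ℝ), 0 < ε → ∃ f : H, ∀ x : X, |T f x - g x| ≤ ε) →
          StrictlyPD k) ∧
    (∀ (X : Type) [TopologicalSpace X] [T2Space X] [LocallyCompactSpace X]
        (k : X → X → ℝ), (∃ C : ℝ, ∀ x y : X, |k x y| ≤ C) →
        (∀ x : X, Continuous (fun y => k y x) ∧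
          Tendsto (fun y => k y x) (cocompact X) (𝓝 0)) →
        ∀ (H : Type) [NormedAddCommGroup H] [InnerProductSpace ℝ H] [CompleteSpace H]
          (T : H →ₗ[ℝ] (X → ℝ)) (Φ : X → H),
          Function.Injective T →
          (∀ x y : X, k x y = ⟪Φ x, Φ y⟫) →
          (∀ (f : H) (x : X), T f x = ⟪f, Φ x⟫) →
          (∀ (g : C₀(X, ℝ)) (ε : ℝ), 0 < ε → ∃ f : H, ∀ x : X, |T f x - g x| ≤ ε) →
          StrictlyPD k) := by
  refine ⟨?_, ?_, ?_⟩
  · intro X _ _ _ k _ _ H _ _ _ T Φ _ hk hT happrox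
    refine strictlyPD_of_approx_indicator hk fun a F hF ha ε hε => ?_
    obtain ⟨g, -, hga, hgF⟩ := exists_hasCompactSupport_one_zero_of_finite hF ha
    obtain ⟨f, hf⟩ := happrox (insert a F) (hF.insert a).isCompact (g.restrict _) ε hε
    refine ⟨f, ?_, fun y hy => ?_⟩
    · simpa [hT, hga] using hf ⟨a, Set.mem_insert a F⟩
    · simpa [hT, hgF y hy] using hf ⟨y, Set.mem_insert_of_mem a hy⟩
  · intro X _ _ _ k _ H _ _ _ T Φ _ hk hT happrox
    refine strictlyPD_of_approx_indicator hk fun a F hF ha ε hε => ?_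
    obtain ⟨g, -, hga, hgF⟩ := exists_hasCompactSupport_one_zero_of_finite hF ha
    obtain ⟨f, hf⟩ := happrox g ε hε
    refine ⟨f, ?_, fun y hy => ?_⟩
    · simpa [hT, hga] using hf a
    · simpa [hT, hgF y hy] using hf y
  · intro X _ _ _ k _ _ H _ _ _ T Φ _ hk hT happrox
    refine strictlyPD_of_approx_indicator hk fun a F hF ha ε hε => ?_
    obtain ⟨g, hsupp, hga, hgF⟩ := exists_hasCompactSupport_one_zero_of_finite hF ha
    obtain ⟨f, hf⟩ := happrox ⟨g, hsupp.is_zero_at_infty⟩ ε hε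
    change ∀ x, |T f x - g x| ≤ ε at hf
    refine ⟨f, ?_, fun y hy => ?_⟩
    · simpa [hT, hga] using hf a
    · simpa [hT, hgF y hy] using hf y
end

section
/- Let ψ : ℝ^d → ℝ be a nonzero bounded continuous positive definite function with ψ ∈ C_0(ℝ^d), let Λ be the finite nonnegative Borel measure on ℝ^d with ψ(x) = ∫_{ℝ^d} e^{−i xᵀω} dΛ(ω) given by Bochner's theorem, and let k(x,y) = ψ(x − y). Then k is c0-universal if and only if supp(Λ) = ℝ^d. -/
open MeasureTheory Filter Topology RealInnerProductSpace
open scoped ZeroAtInfty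

/-- The topological support of a nonnegative Borel measure: the set of points all of
whose open neighbourhoods have positive measure. -/
def msupport {X : Type*} [TopologicalSpace X] [MeasurableSpace X]
    (μ : MeasureTheory.Measure X) : Set X :=
  {x | ∀ U : Set X, IsOpen U → x ∈ U → μ U ≠ 0}

open ComplexConjugate
open scoped SchwartzMap FourierTransform

namespace ZeroAtInftyContinuousMap

section General

variable {α : Type*} [TopologicalSpace α]

theorem norm_apply_le (f : C₀(α, ℂ)) (x : α) : ‖f x‖ ≤ ‖f‖ :=
  f.toBCF.norm_coe_le_norm x

theorem norm_le_of_forall {f : C₀(α, ℂ)} {C : ℝ} (hC : 0 ≤ C) (h : ∀ x, ‖f x‖ ≤ C) : ‖f‖ ≤ C :=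
  (BoundedContinuousFunction.norm_le (f := f.toBCF) hC).2 h

theorem exists_isCompact_norm_lt (f : C₀(α, ℂ)) {ε : ℝ} (hε : 0 < ε) :
    ∃ K : Set α, IsCompact K ∧ ∀ x ∉ K, ‖f x‖ < ε := by
  have h := (Metric.tendsto_nhds.1 (zero_at_infty f)) ε hε
  obtain ⟨K, hK, hsub⟩ := Filter.mem_cocompact.1 h
  exact ⟨K, hK, fun x hx => by simpa using hsub hx⟩

/-- Evaluation at a point as a continuous linear functional on `C₀(α, ℂ)`. -/
noncomputable def evalCLM (x : α) : C₀(α, ℂ) →L[ℂ] ℂ :=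
  LinearMap.mkContinuous
    { toFun := fun f => f x
      map_add' := fun _ _ => rfl
      map_smul' := fun _ _ => rfl } 1 (fun f => by simpa using norm_apply_le f x)

@[simp]
theorem evalCLM_apply (x : α) (f : C₀(α, ℂ)) : evalCLM x f = f x := rfl

/-- A continuous linear functional on `C₀(α, ℂ)` is tight: it is small on the part of the unit
ball that vanishes on a suitable compact set. -/
theorem exists_isCompact_norm_apply_le (L : C₀(α, ℂ) →L[ℂ] ℂ) {ε : ℝ} (hε : 0 < ε) :
    ∃ K : Set α, IsCompact K ∧
      ∀ g : C₀(α, ℂ), (∀ x ∈ K, g x = 0) → ‖g‖ ≤ 1 → ‖L g‖ ≤ ε := by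
  have hL : 0 < 1 + ‖L‖ := by positivity
  set δ := ε / (1 + ‖L‖) with hδ
  have hδpos : 0 < δ := by positivity
  obtain ⟨f, hf1, hf2⟩ := L.exists_lt_apply_of_lt_opNorm (r := ‖L‖ - δ) (by linarith)
  obtain ⟨K, hK, hfK⟩ := exists_isCompact_norm_lt f hδpos
  refine ⟨K, hK, fun g hg hg1 => ?_⟩
  obtain ⟨a, ha, haf⟩ := RCLike.exists_norm_eq_mul_self (L f)
  obtain ⟨b, hb, hbg⟩ := RCLike.exists_norm_eq_mul_self (L g)
  have hsum : L (a • f + b • g) = ((‖L f‖ + ‖L g‖ : ℝ) : ℂ) := by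
    rw [map_add, map_smul, map_smul, smul_eq_mul, smul_eq_mul, ← haf, ← hbg]
    push_cast
    rfl
  have hnorm : ‖a • f + b • g‖ ≤ 1 + δ := by
    refine norm_le_of_forall (by positivity) fun x => ?_
    have h1 : ‖(a • f + b • g) x‖ ≤ ‖f x‖ + ‖g x‖ := by
      refine (norm_add_le _ _).trans_eq ?_
      simp [ha, hb]
    by_cases hx : x ∈ K
    · have := norm_apply_le f x
      rw [hg x hx, norm_zero] at h1
      linarith
    · have := norm_apply_le g x
      have := hfK x hx
      linarith
  have h2 : ‖L f‖ + ‖L g‖ ≤ ‖L‖ * (1 + δ) := by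
    have h3 := (L.le_opNorm (a • f + b • g)).trans
      (mul_le_mul_of_nonneg_left hnorm (norm_nonneg L))
    rwa [hsum, Complex.norm_real, Real.norm_of_nonneg (by positivity)] at h3
  have h4 : δ * (1 + ‖L‖) = ε := by rw [hδ]; field_simp
  nlinarith

/-- A proper closed subspace of `C₀(α, ℂ)` is annihilated by a nonzero functional, so a subspace
on which only the zero functional vanishes is dense. -/
theorem topologicalClosure_eq_top_of_forall_dual (S : Submodule ℂ C₀(α, ℂ))
    (h : ∀ L : C₀(α, ℂ) →L[ℂ] ℂ, (∀ f ∈ S, L f = 0) → L = 0) :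
    S.topologicalClosure = ⊤ := by
  refine (Submodule.eq_top_iff').2 fun g => ?_
  by_contra hg
  obtain ⟨L, u, hu, hug⟩ := RCLike.geometric_hahn_banach_closed_point (𝕜 := ℂ)
    (s := (S.topologicalClosure : Set C₀(α, ℂ)))
    ((S.topologicalClosure.restrictScalars ℝ).convex) S.isClosed_topologicalClosure hg
  have hzero : ∀ f ∈ S, L f = 0 := by
    intro f hf
    by_contra hne
    have := hu ((((u : ℂ)) / L f) • f)
      (S.topologicalClosure.smul_mem _ (S.le_topologicalClosure hf))
    rw [map_smul, smul_eq_mul, div_mul_cancel₀ _ hne] at this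
    simp at this
  have hL := h L hzero
  have h0 := hu 0 (Submodule.zero_mem _)
  rw [hL] at h0 hug
  simp at h0 hug
  linarith

end General

section Modulation

variable {E : Type*} [NormedAddCommGroup E] [InnerProductSpace ℝ E]

theorem norm_exp_I_mul_inner (x ω : E) : ‖Complex.exp (Complex.I * (⟪x, ω⟫ : ℝ))‖ = 1 := by
  rw [mul_comm]
  exact Complex.norm_exp_ofReal_mul_I _

/-- The product of `χ` with the character `x ↦ exp (i ⟪x, ω⟫)`. -/
noncomputable def modulate (χ : C₀(E, ℂ)) (ω : E) : C₀(E, ℂ) where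
  toFun x := χ x * Complex.exp (Complex.I * (⟪x, ω⟫ : ℝ))
  continuous_toFun := by fun_prop
  zero_at_infty' := by
    rw [tendsto_zero_iff_norm_tendsto_zero]
    simp_rw [norm_mul, norm_exp_I_mul_inner, mul_one]
    exact tendsto_zero_iff_norm_tendsto_zero.1 (zero_at_infty χ)

theorem modulate_apply (χ : C₀(E, ℂ)) (ω x : E) :
    modulate χ ω x = χ x * Complex.exp (Complex.I * (⟪x, ω⟫ : ℝ)) := rfl

theorem norm_modulate_le (χ : C₀(E, ℂ)) (ω : E) : ‖modulate χ ω‖ ≤ ‖χ‖ :=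
  norm_le_of_forall (norm_nonneg _) fun x => by
    rw [modulate_apply, norm_mul, norm_exp_I_mul_inner, mul_one]
    exact norm_apply_le χ x

theorem continuous_modulate {χ : C₀(E, ℂ)} {R : ℝ} (hχ : ∀ x, R < ‖x‖ → χ x = 0) :
    Continuous (modulate χ) := by
  refine (LipschitzWith.of_dist_le_mul (K := (‖χ‖ * |R|).toNNReal) fun ω η => ?_).continuous
  rw [Real.coe_toNNReal _ (by positivity), dist_eq_norm, dist_eq_norm]
  refine norm_le_of_forall (by positivity) fun x => ?_
  rw [sub_apply, modulate_apply, modulate_apply, ← mul_sub, norm_mul, mul_assoc]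
  by_cases hx : R < ‖x‖
  · rw [hχ x hx, norm_zero, zero_mul]
    positivity
  refine mul_le_mul (norm_apply_le χ x) ?_ (norm_nonneg _) (norm_nonneg _)
  have hfac : Complex.exp (Complex.I * (⟪x, ω⟫ : ℝ)) - Complex.exp (Complex.I * (⟪x, η⟫ : ℝ)) =
      Complex.exp (Complex.I * (⟪x, η⟫ : ℝ)) *
        (Complex.exp (Complex.I * (⟪x, ω - η⟫ : ℝ)) - 1) := by
    rw [mul_sub, mul_one, ← Complex.exp_add, inner_sub_right]
    congr 2
    push_cast
    ring
  rw [hfac, norm_mul, norm_exp_I_mul_inner, one_mul]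
  refine (Real.norm_exp_I_mul_ofReal_sub_one_le).trans ((norm_inner_le_norm _ _).trans ?_)
  exact mul_le_mul_of_nonneg_right ((not_lt.1 hx).trans (le_abs_self R)) (norm_nonneg _)

theorem exists_cutoff (E : Type*) [NormedAddCommGroup E] [InnerProductSpace ℝ E]
    [FiniteDimensional ℝ E] (n : ℕ) :
    ∃ χ : ContDiffBump (0 : E), (∀ x, ‖x‖ ≤ n → χ x = 1) ∧ ∀ x, (n : ℝ) + 2 < ‖x‖ → χ x = 0 := by
  refine ⟨⟨n + 1, n + 2, by positivity, by linarith⟩, fun x hx => ?_, fun x hx => ?_⟩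
  · exact ContDiffBump.one_of_mem_closedBall _ (by simp; linarith)
  · exact ContDiffBump.zero_of_le_dist _ (by simpa using hx.le)

/-- Continuous cutoffs exhausting `E`. -/
theorem exists_seq_cutoff (E : Type*) [NormedAddCommGroup E] [InnerProductSpace ℝ E]
    [FiniteDimensional ℝ E] :
    ∃ χ : ℕ → C₀(E, ℂ), (∀ (n : ℕ) x, ‖x‖ ≤ n → χ n x = 1) ∧
      (∀ (n : ℕ) x, (n : ℝ) + 2 < ‖x‖ → χ n x = 0) ∧ ∀ n x, ∃ t : ℝ, 0 ≤ t ∧ t ≤ 1 ∧ χ n x = t := by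
  choose χ h1 h0 using exists_cutoff E
  refine ⟨fun n => ⟨⟨fun x => (χ n x : ℂ), Complex.continuous_ofReal.comp (χ n).continuous⟩, ?_⟩,
    fun n x hx => ?_, fun n x hx => ?_, fun n x => ⟨χ n x, (χ n).nonneg, (χ n).le_one, rfl⟩⟩
  · have : HasCompactSupport fun x => (χ n x : ℂ) :=
      (χ n).hasCompactSupport.comp_left (g := fun t : ℝ => (t : ℂ)) Complex.ofReal_zero
    exact this.is_zero_at_infty
  · change (χ n x : ℂ) = 1
    rw [h1 n x hx, Complex.ofReal_one]
  · change (χ n x : ℂ) = 0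
    rw [h0 n x hx, Complex.ofReal_zero]

theorem tendsto_cutoff_mul {E : Type*} [NormedAddCommGroup E] {χ : ℕ → C₀(E, ℂ)}
    (h1 : ∀ (n : ℕ) x, ‖x‖ ≤ n → χ n x = 1)
    (hχ : ∀ n x, ∃ t : ℝ, 0 ≤ t ∧ t ≤ 1 ∧ χ n x = t) (g : C₀(E, ℂ)) :
    Tendsto (fun n => χ n * g) atTop (𝓝 g) := by
  refine Metric.tendsto_atTop.2 fun ε hε => ?_
  obtain ⟨K, hK, hgK⟩ := exists_isCompact_norm_lt g (half_pos hε)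
  obtain ⟨R, hR⟩ := hK.isBounded.exists_norm_le
  obtain ⟨N, hN⟩ := exists_nat_ge R
  refine ⟨N, fun n hn => lt_of_le_of_lt ?_ (half_lt_self hε)⟩
  rw [dist_eq_norm]
  refine norm_le_of_forall (by positivity) fun x => ?_
  rw [sub_apply, mul_apply]
  by_cases hx : x ∈ K
  · have hnN : (N : ℝ) ≤ n := by exact_mod_cast hn
    rw [h1 n x (by linarith [hR x hx]), one_mul, sub_self, norm_zero]
    positivity
  · obtain ⟨t, ht0, ht1, ht⟩ := hχ n x
    have hfac : χ n x * g x - g x = ((t - 1 : ℝ) : ℂ) * g x := by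
      rw [ht]
      push_cast
      ring
    rw [hfac, norm_mul, Complex.norm_real, Real.norm_eq_abs]
    have habs : |t - 1| ≤ 1 := abs_le.2 ⟨by linarith, by linarith⟩
    nlinarith [hgK x hx, norm_nonneg (g x), abs_nonneg (t - 1)]

variable [FiniteDimensional ℝ E]

theorem denseRange_schwartz_toZeroAtInfty :
    DenseRange (SchwartzMap.toZeroAtInfty : 𝓢(E, ℂ) → C₀(E, ℂ)) := by
  refine Metric.denseRange_iff.2 fun g ε hε => ?_
  obtain ⟨χ, h1, h0, hχ⟩ := exists_seq_cutoff E
  obtain ⟨n, hn⟩ := ((Metric.tendsto_nhds.1 (tendsto_cutoff_mul h1 hχ g)) (ε / 2)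
    (half_pos hε)).exists
  have hsupp : HasCompactSupport (χ n * g : C₀(E, ℂ)) := by
    refine HasCompactSupport.intro (isCompact_closedBall (0 : E) (n + 2)) fun x hx => ?_
    rw [mul_apply, h0 n x (by simpa using hx), zero_mul]
  obtain ⟨f, hf, hdist, hsub⟩ := (map_continuous (χ n * g)).exists_contDiff_approx ⊤
    (ε := fun _ => ε / 4) continuous_const (fun _ => by positivity)
  refine ⟨(hsupp.mono hsub).toSchwartzMap hf, ?_⟩
  have h2 : dist (χ n * g) ((hsupp.mono hsub).toSchwartzMap hf).toZeroAtInfty ≤ ε / 4 := by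
    rw [dist_comm, dist_eq_norm]
    refine norm_le_of_forall (by positivity) fun x => ?_
    rw [sub_apply, ← dist_eq_norm]
    exact (hdist x).le
  linarith [dist_triangle_left g ((hsupp.mono hsub).toSchwartzMap hf).toZeroAtInfty (χ n * g)]

variable [MeasurableSpace E] [BorelSpace E]

/-- Every continuous linear functional `L` on `C₀(E, ℂ)` has a symbol `m`, a bounded continuous
function playing the role of `ω ↦ L (exp (i ⟪·, ω⟫))`: on a superposition of characters
vanishing at infinity, `L` is computed by integrating `m`. -/
theorem exists_symbol (L : C₀(E, ℂ) →L[ℂ] ℂ) :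
    ∃ m : BoundedContinuousFunction E ℂ,
      ∀ (ν : Measure E) (θ : E → E) (w : E → ℂ) (g : C₀(E, ℂ)),
        Measurable θ → Integrable w ν →
        (∀ x, g x = ∫ a, w a * Complex.exp (Complex.I * (⟪x, θ a⟫ : ℝ)) ∂ν) →
        L g = ∫ a, w a * m (θ a) ∂ν := by
  obtain ⟨χ, h1, h0, hχ⟩ := exists_seq_cutoff E
  have hcont : ∀ n, Continuous (modulate (χ n)) := fun n => continuous_modulate (h0 n)
  have hχnorm : ∀ n, ‖χ n‖ ≤ 1 := fun n => norm_le_of_forall zero_le_one fun x => by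
    obtain ⟨t, ht0, ht1, ht⟩ := hχ n x
    rw [ht, Complex.norm_real, Real.norm_of_nonneg ht0]
    exact ht1
  have hmod : ∀ n ω, ‖modulate (χ n) ω‖ ≤ 1 := fun n ω => (norm_modulate_le _ _).trans (hχnorm n)
  have hbound : ∀ n ω, ‖L (modulate (χ n) ω)‖ ≤ ‖L‖ := fun n ω => by
    simpa using L.le_opNorm_of_le (hmod n ω)
  let m : ℕ → BoundedContinuousFunction E ℂ := fun n =>
    BoundedContinuousFunction.ofNormedAddCommGroup (fun ω => L (modulate (χ n) ω))
      (L.continuous.comp (hcont n)) ‖L‖ (hbound n)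
  have hcauchy : CauchySeq m := by
    refine Metric.cauchySeq_iff'.2 fun ε hε => ?_
    obtain ⟨K, hK, hLK⟩ := exists_isCompact_norm_apply_le L (half_pos hε)
    obtain ⟨R, hR⟩ := hK.isBounded.exists_norm_le
    obtain ⟨N, hN⟩ := exists_nat_ge R
    refine ⟨N, fun n hn => lt_of_le_of_lt ?_ (half_lt_self hε)⟩
    rw [dist_eq_norm]
    refine (BoundedContinuousFunction.norm_le (by positivity)).2 fun ω => ?_
    change ‖L (modulate (χ n) ω) - L (modulate (χ N) ω)‖ ≤ ε / 2
    rw [← map_sub]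
    refine hLK _ (fun x hx => ?_) (norm_le_of_forall zero_le_one fun x => ?_)
    · have hxN : ‖x‖ ≤ N := (hR x hx).trans hN
      have hxn : ‖x‖ ≤ n := hxN.trans (by exact_mod_cast hn)
      rw [sub_apply, modulate_apply, modulate_apply, h1 n x hxn, h1 N x hxN, sub_self]
    · obtain ⟨s, hs0, hs1, hs⟩ := hχ n x
      obtain ⟨t, ht0, ht1, ht⟩ := hχ N x
      rw [sub_apply, modulate_apply, modulate_apply, ← sub_mul, norm_mul, norm_exp_I_mul_inner,
        mul_one, hs, ht, ← Complex.ofReal_sub, Complex.norm_real, Real.norm_eq_abs]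
      exact abs_le.2 ⟨by linarith, by linarith⟩
  obtain ⟨M, hM⟩ := cauchySeq_tendsto_of_complete hcauchy
  refine ⟨M, fun ν θ w g hθ hw hg => ?_⟩
  have hmodmeas : ∀ n, StronglyMeasurable fun a => modulate (χ n) (θ a) := fun n =>
    (hcont n).stronglyMeasurable.comp_measurable hθ
  have hcut : ∀ n, L (χ n * g) = ∫ a, w a * m n (θ a) ∂ν := by
    intro n
    have hint : Integrable (fun a => w a • modulate (χ n) (θ a)) ν := by
      refine Integrable.mono' hw.norm
        (hw.aestronglyMeasurable.smul (hmodmeas n).aestronglyMeasurable)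
        (Eventually.of_forall fun a => ?_)
      rw [norm_smul]
      exact mul_le_of_le_one_right (norm_nonneg _) (hmod n _)
    have heq : χ n * g = ∫ a, w a • modulate (χ n) (θ a) ∂ν := by
      ext x
      rw [← evalCLM_apply x (∫ a, w a • modulate (χ n) (θ a) ∂ν),
        ← (evalCLM x).integral_comp_comm hint, mul_apply, hg x, ← integral_const_mul]
      refine integral_congr_ae (Eventually.of_forall fun a => ?_)
      simp only [evalCLM_apply, smul_apply, modulate_apply, smul_eq_mul]
      ring
    rw [heq, ← L.integral_comp_comm hint]
    refine integral_congr_ae (Eventually.of_forall fun a => ?_)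
    simp only [map_smul, smul_eq_mul]
    rfl
  have hleft : Tendsto (fun n => L (χ n * g)) atTop (𝓝 (L g)) :=
    (L.continuous.tendsto g).comp (tendsto_cutoff_mul h1 hχ g)
  have hright : Tendsto (fun n => L (χ n * g)) atTop (𝓝 (∫ a, w a * M (θ a) ∂ν)) := by
    simp_rw [hcut]
    refine tendsto_integral_of_dominated_convergence (fun a => ‖w a‖ * ‖L‖) (fun n => ?_)
      (hw.norm.mul_const _) (fun n => Eventually.of_forall fun a => ?_)
      (Eventually.of_forall fun a => ?_)
    · exact hw.aestronglyMeasurable.mul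
        ((m n).continuous.stronglyMeasurable.comp_measurable hθ).aestronglyMeasurable
    · rw [norm_mul]
      exact mul_le_mul_of_nonneg_left (hbound n _) (norm_nonneg _)
    · exact tendsto_const_nhds.mul
        (((BoundedContinuousFunction.tendsto_iff_tendstoUniformly.1 hM).tendsto_at (θ a)))
  exact tendsto_nhds_unique hleft hright

/-- Fourier inversion for Schwartz functions, with the character `exp (i ⟪x, 2πv⟫)`. -/
theorem _root_.SchwartzMap.apply_eq_integral_fourier (f : 𝓢(E, ℂ)) (x : E) :
    f x = ∫ v, (𝓕 f) v * Complex.exp (Complex.I * (⟪x, (2 * Real.pi) • v⟫ : ℝ)) := by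
  have h : f x = (𝓕⁻ (𝓕 f)) x := by rw [FourierTransform.fourierInv_fourier_eq]
  rw [h, SchwartzMap.fourierInv_coe, Real.fourierInv_eq']
  refine integral_congr_ae (Eventually.of_forall fun v => ?_)
  simp only [smul_eq_mul, inner_smul_right, real_inner_comm]
  rw [mul_comm]
  congr 2
  push_cast
  ring

/-- A functional annihilating all translates of the Fourier transform of a measure of full support
vanishes. -/
theorem eq_zero_of_forall_translate {Λ : Measure E} [IsFiniteMeasure Λ]
    (hΛ : msupport Λ = Set.univ) (L : C₀(E, ℂ) →L[ℂ] ℂ) (p : E → C₀(E, ℂ))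
    (hp : ∀ x y, p x y = ∫ ω, Complex.exp (-(Complex.I * (⟪x - y, ω⟫ : ℝ))) ∂Λ)
    (hL : ∀ x, L (p x) = 0) : L = 0 := by
  obtain ⟨m, hm⟩ := exists_symbol L
  have hchar : ∀ x : E, Integrable (fun ω => Complex.exp (-(Complex.I * (⟪x, ω⟫ : ℝ)))) Λ := by
    intro x
    refine Integrable.of_bound (by fun_prop) 1 (Eventually.of_forall fun ω => ?_)
    rw [Complex.exp_neg, norm_inv, norm_exp_I_mul_inner, inv_one]
  have hfourier : ∀ x : E, ∫ ω, Complex.exp (-(Complex.I * (⟪x, ω⟫ : ℝ))) * m ω ∂Λ = 0 := by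
    intro x
    rw [← hL x]
    refine (hm Λ id _ (p x) measurable_id (hchar x) fun y => ?_).symm
    rw [hp]
    refine integral_congr_ae (Eventually.of_forall fun ω => ?_)
    simp only [id, ← Complex.exp_add, inner_sub_left]
    congr 1
    push_cast
    ring
  have hmint : Integrable (fun ω => conj (m ω)) Λ :=
    Integrable.of_bound (by fun_prop) ‖m‖ (Eventually.of_forall fun ω => by
      simpa using m.norm_coe_le_norm ω)
  have hsq : ∫ ω, conj (m ω) * m ω ∂Λ = 0 := by
    rw [← map_zero L]
    refine (hm Λ id _ 0 measurable_id hmint fun x => ?_).symm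
    rw [zero_apply, ← map_zero conj, ← hfourier x, ← integral_conj]
    refine integral_congr_ae (Eventually.of_forall fun ω => ?_)
    simp only [id, map_mul, ← Complex.exp_conj, map_neg, Complex.conj_I, Complex.conj_ofReal]
    rw [mul_comm, neg_mul, neg_neg]
  have hnorm : ∫ ω, ‖m ω‖ ^ 2 ∂Λ = 0 := by
    have h : ∀ ω, conj (m ω) * m ω = ((‖m ω‖ ^ 2 : ℝ) : ℂ) := fun ω => by
      rw [Complex.conj_mul']
      push_cast
      rfl
    simp_rw [h, integral_complex_ofReal] at hsq
    exact_mod_cast hsq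
  have hae : ∀ᵐ ω ∂Λ, ‖m ω‖ ^ 2 = 0 := by
    refine (integral_eq_zero_iff_of_nonneg (fun ω => by positivity) ?_).1 hnorm
    refine Integrable.of_bound (by fun_prop) (‖m‖ ^ 2) (Eventually.of_forall fun ω => ?_)
    rw [Real.norm_of_nonneg (by positivity)]
    exact pow_le_pow_left₀ (norm_nonneg _) (m.norm_coe_le_norm ω) 2
  have hm0 : ∀ ω, m ω = 0 := by
    intro ω
    by_contra hne
    have hmem : ω ∈ msupport Λ := hΛ ▸ Set.mem_univ ω
    refine hmem {ω | ‖m ω‖ ^ 2 ≠ 0} ?_ (by simpa using hne) (ae_iff.1 hae)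
    exact isOpen_ne_fun (by fun_prop) continuous_const
  have hschwartz : ∀ f : 𝓢(E, ℂ), L f.toZeroAtInfty = 0 := by
    intro f
    rw [hm volume (fun v => (2 * Real.pi) • v) (𝓕 f : 𝓢(E, ℂ)) f.toZeroAtInfty
      (measurable_const_smul _) (𝓕 f).integrable fun x => f.apply_eq_integral_fourier x]
    simp [hm0]
  refine ContinuousLinearMap.ext fun g => ?_
  exact congrFun (denseRange_schwartz_toZeroAtInfty.equalizer L.continuous
    (0 : C₀(E, ℂ) →L[ℂ] ℂ).continuous (funext hschwartz)) g

theorem exists_schwartz_integral_translate_eq_zero {Λ : Measure E} [IsFiniteMeasure Λ]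
    (hΛ : msupport Λ ≠ Set.univ) :
    ∃ h : 𝓢(E, ℂ), h ≠ 0 ∧
      ∀ x, ∫ y, (∫ ω, Complex.exp (-(Complex.I * (⟪x - y, ω⟫ : ℝ))) ∂Λ) * h y = 0 := by
  obtain ⟨ω₀, hω₀⟩ := (Set.ne_univ_iff_exists_notMem _).1 hΛ
  simp only [msupport, Set.mem_ofPred_eq, not_forall, not_not] at hω₀
  obtain ⟨U, hU, hω₀U, hΛU⟩ := hω₀
  have hpi : (2 * Real.pi) ≠ 0 := by positivity
  set c : E := (2 * Real.pi)⁻¹ • ω₀ with hc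
  have hV : IsOpen ((fun v : E => (2 * Real.pi) • v) ⁻¹' U) := hU.preimage (by fun_prop)
  have hcV : c ∈ (fun v : E => (2 * Real.pi) • v) ⁻¹' U := by
    rwa [Set.mem_preimage, hc, smul_inv_smul₀ hpi]
  obtain ⟨r, hr, hball⟩ := Metric.isOpen_iff.1 hV c hcV
  let b : ContDiffBump c := ⟨r / 2, r, by positivity, by linarith⟩
  have hbsupp : HasCompactSupport fun x => (b x : ℂ) :=
    b.hasCompactSupport.comp_left (g := fun t : ℝ => (t : ℂ)) Complex.ofReal_zero
  have hbsmooth : ContDiff ℝ ((⊤ : ℕ∞) : WithTop ℕ∞) fun x => (b x : ℂ) :=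
    Complex.ofRealCLM.contDiff.comp b.contDiff
  let φ : 𝓢(E, ℂ) := hbsupp.toSchwartzMap hbsmooth
  have hφ : ∀ x, φ x = (b x : ℂ) := fun x => rfl
  have hφU : ∀ ω ∉ U, φ ((2 * Real.pi)⁻¹ • ω) = 0 := by
    intro ω hω
    rw [hφ, b.zero_of_le_dist, Complex.ofReal_zero]
    by_contra hlt
    refine hω ?_
    have := hball (Metric.mem_ball.2 (not_le.1 hlt))
    rwa [Set.mem_preimage, smul_inv_smul₀ hpi] at this
  have hinv : ∀ ω, ∫ y, Complex.exp (Complex.I * (⟪y, ω⟫ : ℝ)) * (𝓕 φ) y =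
      φ ((2 * Real.pi)⁻¹ • ω) := by
    intro ω
    rw [φ.apply_eq_integral_fourier]
    refine integral_congr_ae (Eventually.of_forall fun v => ?_)
    simp only [inner_smul_left, inner_smul_right, real_inner_comm v ω]
    rw [mul_comm]
    congr 4
    simp only [map_inv₀, conj_trivial]
    field_simp
  refine ⟨𝓕 φ, fun h0 => ?_, fun x => ?_⟩
  · have h1 : φ c = 0 := by
      rw [φ.apply_eq_integral_fourier, h0]
      simp
    rw [hφ, b.one_of_mem_closedBall (by simpa using b.rIn_pos.le)] at h1
    simp at h1
  · simp_rw [← integral_mul_const]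
    rw [integral_integral_swap]
    · refine integral_eq_zero_of_ae ?_
      have hae : ∀ᵐ ω ∂Λ, ω ∉ U := measure_eq_zero_iff_ae_notMem.1 hΛU
      filter_upwards [hae] with ω hω
      have hsplit : ∀ y, Complex.exp (-(Complex.I * (⟪x - y, ω⟫ : ℝ))) * (𝓕 φ) y =
          Complex.exp (-(Complex.I * (⟪x, ω⟫ : ℝ))) *
            (Complex.exp (Complex.I * (⟪y, ω⟫ : ℝ)) * (𝓕 φ) y) := by
        intro y
        rw [← mul_assoc, ← Complex.exp_add, inner_sub_left]
        congr 2
        push_cast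
        ring
      simp_rw [hsplit, integral_const_mul, hinv ω, hφU ω hω]
      simp
    · have hfst : Integrable (fun z : E × E => (𝓕 φ) z.1) (volume.prod Λ) :=
        (𝓕 φ).integrable.comp_fst Λ
      refine hfst.norm.mono' ?_ (Eventually.of_forall fun z => ?_)
      · exact (Continuous.aestronglyMeasurable (by fun_prop)).mul hfst.aestronglyMeasurable
      · simp only [Function.uncurry]
        rw [norm_mul, Complex.exp_neg, norm_inv, norm_exp_I_mul_inner, inv_one, one_mul]

end Modulation

end ZeroAtInftyContinuousMap

section RKHS

/-- A feature map of a continuous translation-invariant kernel is continuous. -/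
theorem continuous_of_inner_eq_sub {E : Type*} [NormedAddCommGroup E] {H : Type*}
    [NormedAddCommGroup H] [InnerProductSpace ℝ H] {ψ : E → ℝ} (hψ : Continuous ψ) {Φ : E → H}
    (hΦ : ∀ x y, ⟪Φ x, Φ y⟫ = ψ (x - y)) : Continuous Φ := by
  refine continuous_iff_continuousAt.2 fun x => tendsto_iff_norm_sub_tendsto_zero.2 ?_
  have hnorm : ∀ y, ‖Φ y - Φ x‖ = √(ψ 0 - 2 * ψ (y - x) + ψ 0) := fun y => by
    rw [← Real.sqrt_sq (norm_nonneg (Φ y - Φ x)), norm_sub_sq_real, ← real_inner_self_eq_norm_sq,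
      ← real_inner_self_eq_norm_sq, hΦ, hΦ, hΦ, sub_self, sub_self]
  simp_rw [hnorm]
  have hcont : Continuous fun y => √(ψ 0 - 2 * ψ (y - x) + ψ 0) := by fun_prop
  have hx : √(ψ 0 - 2 * ψ (x - x) + ψ 0) = 0 := by
    rw [sub_self, Real.sqrt_eq_zero']
    linarith
  simpa only [hx] using hcont.tendsto x

variable {E : Type*} [NormedAddCommGroup E] [InnerProductSpace ℝ E] [FiniteDimensional ℝ E]
  [MeasurableSpace E] [BorelSpace E]
  {H : Type*} [NormedAddCommGroup H] [InnerProductSpace ℝ H] [CompleteSpace H]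

/-- If the functions `x ↦ ⟪f, Φ x⟫` are uniformly dense in `C₀(E, ℝ)`, then an integrable
`q : C₀(E, ℝ)` that integrates to zero against the kernel vanishes. -/
theorem eq_zero_of_forall_integral_kernel_eq_zero {Φ : E → H} (hΦ : Continuous Φ) {C : ℝ}
    (hC : ∀ x, ‖Φ x‖ ≤ C) (hinj : ∀ v : H, (∀ x, ⟪v, Φ x⟫ = 0) → v = 0)
    (hdense : ∀ (g : C₀(E, ℝ)) (ε : ℝ), 0 < ε → ∃ f : H, ∀ x, |⟪f, Φ x⟫ - g x| ≤ ε)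
    (q : C₀(E, ℝ)) (hq : Integrable q) (hann : ∀ x, ∫ y, ⟪Φ x, Φ y⟫ * q y = 0) : q = 0 := by
  have hint : Integrable fun y => q y • Φ y := by
    refine (hq.norm.mul_const C).mono'
      (hq.aestronglyMeasurable.smul hΦ.stronglyMeasurable.aestronglyMeasurable)
      (Eventually.of_forall fun y => ?_)
    rw [norm_smul]
    exact mul_le_mul_of_nonneg_left (hC y) (norm_nonneg _)
  have hinner : ∀ f : H, ∫ y, ⟪f, Φ y⟫ * q y = ⟪f, ∫ y, q y • Φ y⟫ := by
    intro f
    rw [← integral_inner hint]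
    refine integral_congr_ae (Eventually.of_forall fun y => ?_)
    simp only [inner_smul_right, mul_comm]
  have hzero : ∫ y, q y • Φ y = 0 := hinj _ fun x => by
    rw [real_inner_comm, ← hinner, hann]
  have hfint : ∀ f : H, Integrable fun y => ⟪f, Φ y⟫ * q y := fun f => by
    refine (hint.const_inner f).congr (Eventually.of_forall fun y => ?_)
    simp only [inner_smul_right, mul_comm]
  have hqint : Integrable fun y => q y * q y := by
    obtain ⟨B, hB⟩ := q.isBounded_range.exists_norm_le
    exact hq.bdd_mul hq.aestronglyMeasurable
      (Eventually.of_forall fun y => hB _ (Set.mem_range_self y))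
  have hsmall : ∀ ε : ℝ, 0 < ε → ∫ y, q y * q y ≤ ε * ∫ y, ‖q y‖ := by
    intro ε hε
    obtain ⟨f, hf⟩ := hdense q ε hε
    have hdiff : ∫ y, q y * q y = ∫ y, (q y * q y - ⟪f, Φ y⟫ * q y) := by
      rw [integral_sub hqint (hfint f), hinner, hzero, inner_zero_right, sub_zero]
    rw [hdiff, ← integral_const_mul]
    refine integral_mono (hqint.sub (hfint f)) (hq.norm.const_mul ε) fun y => ?_
    rw [← sub_mul]
    refine (le_abs_self _).trans ?_
    rw [abs_mul, abs_sub_comm]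
    exact mul_le_mul_of_nonneg_right (hf y) (abs_nonneg _)
  have hle : ∫ y, q y * q y ≤ 0 := by
    have hlim : Tendsto (fun ε : ℝ => ε * ∫ y, ‖q y‖) (𝓝[>] 0) (𝓝 (0 * ∫ y, ‖q y‖)) :=
      (tendsto_id.mono_left nhdsWithin_le_nhds).mul_const _
    rw [zero_mul] at hlim
    exact ge_of_tendsto hlim (eventually_mem_nhdsWithin.mono fun ε hε => hsmall ε hε)
  have hnonneg : 0 ≤ fun y => q y * q y := fun y => mul_self_nonneg (q y)
  have hae := (integral_eq_zero_iff_of_nonneg hnonneg hqint).1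
    (le_antisymm hle (integral_nonneg hnonneg))
  have hfun := (Continuous.ae_eq_iff_eq volume (f := fun y => q y * q y) (by fun_prop)
    continuous_const).1 hae
  ext y
  exact mul_self_eq_zero.1 (congrFun hfun y)

end RKHS

/-- Let `ψ : ℝᵈ → ℝ` be a nonzero bounded continuous positive definite
function vanishing at infinity, let `Λ` be the finite nonnegative Borel measure with
`ψ(x) = ∫ e^{-i⟪x,ω⟫} dΛ(ω)` (Bochner), and let `k(x,y) = ψ(x−y)` with RKHS `H`.  Then
`k` is c₀-universal iff `supp(Λ) = ℝᵈ`. -/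
theorem stmt7 {d : ℕ}
    (ψ : EuclideanSpace ℝ (Fin d) → ℝ) (hψne : ψ ≠ 0)
    (hψcont : Continuous ψ) (hψbdd : ∃ C : ℝ, ∀ x, |ψ x| ≤ C)
    (hψ0 : Tendsto ψ (cocompact (EuclideanSpace ℝ (Fin d))) (𝓝 0))
    (Λ : Measure (EuclideanSpace ℝ (Fin d))) [IsFiniteMeasure Λ]
    (hBochner : ∀ x, (ψ x : ℂ) =
      ∫ ω, Complex.exp (-(Complex.I * (⟪x, ω⟫ : ℝ))) ∂Λ)
    (k : EuclideanSpace ℝ (Fin d) → EuclideanSpace ℝ (Fin d) → ℝ)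
    (hkψ : ∀ x y, k x y = ψ (x - y))
    {H : Type*} [NormedAddCommGroup H] [InnerProductSpace ℝ H] [CompleteSpace H]
    (T : H →ₗ[ℝ] (EuclideanSpace ℝ (Fin d) → ℝ)) (hT : Function.Injective T)
    (Φ : EuclideanSpace ℝ (Fin d) → H)
    (hk : ∀ x y, k x y = ⟪Φ x, Φ y⟫)
    (hrepro : ∀ (f : H) x, T f x = ⟪f, Φ x⟫) :
    (∀ (g : C₀(EuclideanSpace ℝ (Fin d), ℝ)) (ε : ℝ), 0 < ε →
        ∃ f : H, ∀ x, |T f x - g x| ≤ ε) ↔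
      msupport Λ = Set.univ := by
  have hkernel : ∀ x y, ⟪Φ x, Φ y⟫ = ψ (x - y) := fun x y => by rw [← hk, hkψ]
  have hinj : ∀ v : H, (∀ x, ⟪v, Φ x⟫ = 0) → v = 0 := fun v hv => hT <| by
    rw [map_zero]
    exact funext fun x => (hrepro v x).trans (hv x)
  constructor
  · intro hdense
    by_contra hΛ
    simp_rw [hrepro] at hdense
    obtain ⟨h, hne, hann⟩ := ZeroAtInftyContinuousMap.exists_schwartz_integral_translate_eq_zero hΛ
    simp_rw [← hBochner] at hann
    have hΦ : Continuous Φ := continuous_of_inner_eq_sub hψcont hkernel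
    have hΦnorm : ∀ x, ‖Φ x‖ ≤ √(ψ 0) := fun x => by
      refine Real.le_sqrt_of_sq_le ?_
      rw [← real_inner_self_eq_norm_sq, hkernel, sub_self]
    have hint : ∀ x, Integrable fun y => (ψ (x - y) : ℂ) * h y := by
      obtain ⟨C, hC⟩ := hψbdd
      exact fun x => h.integrable.bdd_mul (c := C)
        (Continuous.aestronglyMeasurable (by fun_prop))
        (Eventually.of_forall fun y => by simpa using hC (x - y))
    have hpart : ∀ ℓ : ℂ →L[ℝ] ℝ, (∀ y, ℓ (h y) = 0) := by
      intro ℓ y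
      let q : C₀(EuclideanSpace ℝ (Fin d), ℝ) :=
        ⟨⟨fun y => ℓ (h y), by fun_prop⟩, by
          simpa [Function.comp_def] using
            (ℓ.continuous.tendsto 0).comp (zero_at_infty h.toZeroAtInfty)⟩
      have hq : q = 0 := by
        refine eq_zero_of_forall_integral_kernel_eq_zero hΦ hΦnorm hinj hdense q
          (ℓ.integrable_comp h.integrable) fun x => ?_
        rw [← map_zero ℓ, ← hann x, ← ℓ.integral_comp_comm (hint x)]
        refine integral_congr_ae (Eventually.of_forall fun y => ?_)
        change ⟪Φ x, Φ y⟫ * ℓ (h y) = ℓ ((ψ (x - y) : ℂ) * h y)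
        rw [hkernel, ← Complex.real_smul, map_smul, smul_eq_mul]
      exact DFunLike.congr_fun hq y
    exact hne (SchwartzMap.ext fun y =>
      Complex.ext (hpart Complex.reCLM y) (hpart Complex.imCLM y))
  · intro hΛ g ε hε
    let p : EuclideanSpace ℝ (Fin d) → C₀(EuclideanSpace ℝ (Fin d), ℂ) := fun x =>
      ⟨⟨fun y => (ψ (x - y) : ℂ), by fun_prop⟩, by
        have hsub : Tendsto (fun y => x - y) (cocompact (EuclideanSpace ℝ (Fin d)))
            (cocompact _) := (Homeomorph.subLeft x).isClosedEmbedding.tendsto_cocompact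
        simpa [Function.comp_def] using (Complex.continuous_ofReal.tendsto 0).comp (hψ0.comp hsub)⟩
    have hspan := ZeroAtInftyContinuousMap.topologicalClosure_eq_top_of_forall_dual
      (Submodule.span ℂ (Set.range p)) fun L hL =>
        ZeroAtInftyContinuousMap.eq_zero_of_forall_translate hΛ L p
          (fun x y => hBochner (x - y))
          fun x => hL _ (Submodule.subset_span (Set.mem_range_self x))
    let gc : C₀(EuclideanSpace ℝ (Fin d), ℂ) :=
      ⟨⟨fun y => (g y : ℂ), by fun_prop⟩, by
        simpa [Function.comp_def] using (Complex.continuous_ofReal.tendsto 0).comp (zero_at_infty g)⟩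
    have hgc : gc ∈ closure (Submodule.span ℂ (Set.range p) : Set _) := by
      rw [← Submodule.topologicalClosure_coe, hspan]
      trivial
    obtain ⟨s, hs, hdist⟩ := Metric.mem_closure_iff.1 hgc ε hε
    have hreal : ∀ s ∈ Submodule.span ℂ (Set.range p),
        ∃ f₁ f₂ : H, ∀ y, T f₁ y = (s y).re ∧ T f₂ y = (s y).im := by
      intro s hs
      induction hs using Submodule.span_induction with
      | mem s hs =>
        obtain ⟨x, rfl⟩ := hs
        refine ⟨Φ x, 0, fun y => ⟨?_, ?_⟩⟩
        · rw [hrepro, hkernel]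
          exact (Complex.ofReal_re _).symm
        · rw [map_zero]
          exact (Complex.ofReal_im _).symm
      | zero => exact ⟨0, 0, fun y => by simp⟩
      | add s t _ _ hs ht =>
        obtain ⟨f₁, f₂, hf⟩ := hs
        obtain ⟨k₁, k₂, hfk⟩ := ht
        exact ⟨f₁ + k₁, f₂ + k₂, fun y => by simp [hf y, hfk y]⟩
      | smul c s _ hs =>
        obtain ⟨f₁, f₂, hf⟩ := hs
        exact ⟨c.re • f₁ - c.im • f₂, c.re • f₂ + c.im • f₁, fun y => by simp [hf y]⟩
    obtain ⟨f, _, hf⟩ := hreal s hs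
    refine ⟨f, fun x => ?_⟩
    have hre : T f x - g x = (s x - gc x).re := by
      rw [(hf x).1, Complex.sub_re]
      exact congrArg _ (Complex.ofReal_re _).symm
    rw [hre]
    refine (Complex.abs_re_le_norm _).trans ?_
    rw [dist_comm, dist_eq_norm] at hdist
    exact (ZeroAtInftyContinuousMap.norm_apply_le (s - gc) x).trans hdist.le
end
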